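/- arXiv:1212.4590 — 2 statements merged into one kernel-verified Lean document; each statement's English description precedes it below -/
import Mathlib

section
/- For every finitely generated A-module M and every integer r with 0 ≤ r ≤ n, there exists an A-linear map t_{r−1}(M) → Ext^r_A(Ext^r_A(M, A), A) whose kernel is exactly t_r(M); equivalently, the quotient module t_{r−1}(M)/t_r(M) admits an injective A-linear map into Ext^r_A(Ext^r_A(M, A), A). -/
/-!
Write `A = k[x₁, …, x_n]` and `cd` for the codimension. The map is the biduality map, written
through a regular sequence so that no double complex is needed.

Both `T = t_{r-1}(M)` and `E = Ext^r(M, A)` have codimension at least `r`, so some regular sequence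
`rs` of length `r` in `A` kills both. Each `t ∈ T` gives `A/rs → M`, `1 ↦ t`, hence a map
`Ext^r(M, A) → Ext^r(A/rs, A)`. By Rees' isomorphism `Ext^r(N, A) ≃ Hom(N, A/rs)`, valid for every
`N` killed by `rs`, the target is `A/rs`, and the resulting element of `Hom(E, A/rs)` is an element
of `Ext^r(E, A)`. The image of `t` is zero if and only if the restriction
`Ext^r(M, A) → Ext^r(A·t, A)` is zero, since `Ext^r(A·t, A) → Ext^r(A/rs, A)` is injective.
`ext_subtype_span_eq_zero_iff` shows that this happens exactly when `cd(A·t) > r`.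

Four facts about `A` carry the argument:

* an ideal of codimension at least `c` contains a regular sequence of length `c`
  (`exists_isWeaklyRegular`), by a change of variables making an element monic and induction on `n`;
* `A/rs` is unmixed (`exists_ne_zero_of_not_codimGE`, `not_codimGE_of_ne_zero`);
* `Ext^j(N, A) = 0` for `j > n` and `N` finitely generated (`ext_eq_zero_of_lt`), because maximal
  ideals of `A` are generated by regular sequences of length `n`;
* `Ext^j(N, A)` has codimension at least `j` (`codimGE_annihilator_ext`).
-/

open CategoryTheory

/-- `Ext^i_A(M, A)` as a module over `A`, defined via the derived functor `Ext` of Mathlib. -/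
noncomputable def extModule (A : Type) [CommRing A] (M : Type) [AddCommGroup M] [Module A M]
    (i : ℕ) : ModuleCat A :=
  ((Ext A (ModuleCat A) i).obj (Opposite.op (ModuleCat.of A M))).obj (ModuleCat.of A A)

/-- `cd(A·m) > r` for an element `m` of an `A = k[x_1, …, x_n]`-module, expressed as
`dim (A / ann_A(A·m)) < n - r`. -/
def CdSpanGT (k : Type) [Field k] (n : ℕ) (r : ℕ) {M : Type} [AddCommGroup M]
    [Module (MvPolynomial (Fin n) k) M] (m : M) : Prop :=
  ringKrullDim (MvPolynomial (Fin n) k ⧸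
      (Submodule.span (MvPolynomial (Fin n) k) {m}).annihilator)
    < ((n - r : ℕ) : WithBot (WithTop ℕ))

/-! ### Comparison of the two constructions of `Ext` -/

open CategoryTheory.Abelian in
/-- In degree `0` there are no coboundaries: a cocycle on a projective resolution representing
the zero class of `Ext⁰` is zero. -/
theorem extMk_zero_degree {A : Type} [CommRing A] {X Y : ModuleCat.{0} A}
    (P : ProjectiveResolution X) (f : P.complex.X 0 ⟶ Y) (hf : P.complex.d 1 0 ≫ f = 0) :
    P.extMk f 1 rfl hf = 0 → f = 0 := by
  intro h
  rw [← P.extEquivCohomologyClass.apply_eq_iff_eq] at h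
  simp only [ProjectiveResolution.extEquivCohomologyClass_extMk, ProjectiveResolution.extEquivCohomologyClass_zero,
    CochainComplex.HomComplex.CohomologyClass.mk_eq_zero_iff] at h
  rw [CochainComplex.HomComplex.Cocycle.toSingleMk_mem_coboundaries_iff _ _ _ _ _ 1 (by simp)] at h
  obtain ⟨g, hg⟩ := h
  have hz : P.cochainComplex.d (-((0:ℕ):ℤ)) 1 = 0 := by
    apply Limits.IsZero.eq_of_tgt
    exact CochainComplex.isZero_of_isStrictlyLE P.cochainComplex 0 1 (by simp)
  rw [hz, Limits.zero_comp] at hg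
  rw [← cancel_epi (P.cochainComplexXIso (-((0:ℕ):ℤ)) 0 rfl).hom, ← hg, Limits.comp_zero]

/-- The map sending an `n`-cocycle of `Hom(P, Y)`, for `P` a projective resolution of `X`, to its
class in `Abelian.Ext X Y n`, as a linear map. -/
noncomputable def extMkLin {A : Type} [CommRing A] {X Y : ModuleCat.{0} A}
    (P : ProjectiveResolution X) (n : ℕ) :
    LinearMap.ker ((P.complex.linearYonedaObj A Y).d n (n+1)).hom →ₗ[A] Abelian.Ext X Y n where
  toFun f := P.extMk (Y := Y) f.1 (n+1) rfl f.2
  map_add' f g := (P.add_extMk _ _ _ _ _ _).symm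
  map_smul' a f := by
    rw [Abelian.Ext.smul_eq_comp_mk₀, RingHom.id_apply]
    refine Eq.trans ?_ (P.extMk_comp_mk₀ (Y := Y) (Y' := Y) f.1 (n+1) rfl f.2 (a • 𝟙 Y)).symm
    congr 1

/-- The derived functor `Ext` and `Abelian.Ext`, the morphisms in the derived category, agree as
`A`-modules: both are the cohomology of `Hom(P, A)` for a projective resolution `P` of `M`. -/
theorem exists_extEquiv (A : Type) [CommRing A] (M : Type) [AddCommGroup M] [Module A M] (i : ℕ) :
    Nonempty (extModule A M i ≃ₗ[A] Abelian.Ext (ModuleCat.of A M) (ModuleCat.of A A) i) := by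
  obtain ⟨P⟩ := (inferInstance : HasProjectiveResolution (ModuleCat.of A M)).out
  suffices h : Nonempty ((P.complex.linearYonedaObj A (ModuleCat.of A A)).homology i ≃ₗ[A]
      Abelian.Ext (ModuleCat.of A M) (ModuleCat.of A A) i) from
    h.map fun e => (P.isoExt (R := A) i (ModuleCat.of A A)).toLinearEquiv.trans e
  refine ⟨?_⟩
  let C := P.complex.linearYonedaObj A (ModuleCat.of A A)
  let φ := extMkLin (Y := ModuleCat.of A A) P i
  have hφ : Function.Surjective φ := by
    intro x
    obtain ⟨f, hf, h⟩ := P.extMk_surjective x (i+1) rfl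
    exact ⟨⟨f, hf⟩, h⟩
  let S := C.sc' (i-1) i (i+1)
  let e1 : C.homology i ≅ S.homology := ShortComplex.homologyMapIso
    (C.isoSc' (i-1) i (i+1) (by cases i <;> simp) (by simp))
  let φ' : LinearMap.ker S.g.hom →ₗ[A] Abelian.Ext (ModuleCat.of A M) (ModuleCat.of A A) i := φ
  have hker : LinearMap.range S.moduleCatToCycles = LinearMap.ker φ' := by
    ext ⟨f, hf⟩
    have key : f ∈ Set.range S.f.hom ↔ φ' ⟨f, hf⟩ = 0 := by
      rcases i with _ | j
      · constructor
        · rintro ⟨g, hg⟩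
          have h0 : S.f = 0 := C.shape _ _ (by simp)
          rw [h0] at hg
          have : (⟨f, hf⟩ : LinearMap.ker S.g.hom) = 0 := Subtype.ext hg.symm
          rw [this, map_zero]
        · intro h
          have h1 := extMk_zero_degree P f hf h
          exact ⟨0, by rw [map_zero]; exact h1.symm⟩
      · exact (P.extMk_eq_zero_iff f (j+1+1) rfl hf j rfl).symm
    rw [LinearMap.mem_ker, ← key, LinearMap.mem_range]
    constructor
    · rintro ⟨g, hg⟩; exact ⟨g, congrArg Subtype.val hg⟩
    · rintro ⟨g, hg⟩; exact ⟨g, Subtype.ext hg⟩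
  exact e1.toLinearEquiv.trans (S.moduleCatHomologyIso.toLinearEquiv.trans
    ((Submodule.quotEquivOfEq _ _ hker).trans (φ'.quotKerEquivOfSurjective hφ)))

/-! ### `Ext` and regular sequences -/

theorem smul_ext_eq_zero {A : Type} [CommRing A] {N : Type} [AddCommGroup N] [Module A N]
    {Y : ModuleCat.{0} A} {a : A} (ha : a ∈ Module.annihilator A N) {j : ℕ}
    (e : Abelian.Ext (ModuleCat.of A N) Y j) : a • e = 0 := by
  have h1 : a • 𝟙 (ModuleCat.of A N) = 0 := by
    ext x
    exact Module.mem_annihilator.1 ha x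
  rw [← Abelian.Ext.mk₀_id_comp e, ← Abelian.Ext.smul_comp, ← Abelian.Ext.mk₀_smul, h1,
    Abelian.Ext.mk₀_zero, Abelian.Ext.zero_comp]

/-- The connecting map `Ext^j(N, L/xL) → Ext^(j+1)(N, L)` is surjective when `x` is regular on `L`
and kills `N`. -/
theorem comp_extClass_surjective {A : Type} [CommRing A] {N L : Type} [AddCommGroup N] [Module A N]
    [AddCommGroup L] [Module A L] {x : A} (hx : IsSMulRegular L x)
    (hN : x ∈ Module.annihilator A N) {j : ℕ} {i : ℕ} (h : j + 1 = i)
    (e : Abelian.Ext (ModuleCat.of A N) (ModuleCat.of A L) i) :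
    ∃ e' : Abelian.Ext (ModuleCat.of A N) (ModuleCat.of A (QuotSMulTop x L)) j,
      e'.comp (hx.smulShortComplex_shortExact (M := ModuleCat.of A L)).extClass h = e := by
  refine Abelian.Ext.covariant_sequence_exact₁ (hS := hx.smulShortComplex_shortExact (M := ModuleCat.of A L)) (ModuleCat.of A N) e ?_ h
  have : ((ModuleCat.of A L).smulShortComplex x).f = x • 𝟙 (ModuleCat.of A L) := by
    ext; rfl
  rw [this]
  exact (Abelian.Ext.smul_eq_comp_mk₀ e x).symm.trans (smul_ext_eq_zero hN e)

/-- Rees: if a weakly `L`-regular sequence `x₁, …, x_c` kills `N`, then `Ext^j(N, L) = 0` for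
`j < c` and `Ext^c(N, L) ≃ Hom(N, L/(x₁, …, x_c)L)`. -/
theorem ext_of_isWeaklyRegular {A : Type} [CommRing A] {N : Type} [AddCommGroup N] [Module A N]
    (rs : List A) : ∀ (L : Type) [AddCommGroup L] [Module A L]
    (_hreg : RingTheory.Sequence.IsWeaklyRegular L rs) (_hN : ∀ x ∈ rs, x ∈ Module.annihilator A N),
    (∀ j < rs.length, ∀ e : Abelian.Ext (ModuleCat.of A N) (ModuleCat.of A L) j, e = 0) ∧
    Nonempty (Abelian.Ext (ModuleCat.of A N) (ModuleCat.of A L) rs.length ≃ₗ[A]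
      (N →ₗ[A] L ⧸ (Ideal.ofList rs • ⊤ : Submodule A L))) := by
  induction rs with
  | nil =>
    intro L _ _ _ _
    refine ⟨fun j hj => absurd hj (Nat.not_lt_zero j), ⟨?_⟩⟩
    have e0 : L ≃ₗ[A] L ⧸ (Ideal.ofList [] • ⊤ : Submodule A L) :=
      (Submodule.quotEquivOfEqBot _ (by rw [Ideal.ofList_nil (R := A), Submodule.bot_smul])).symm
    exact (Abelian.Ext.linearEquiv₀ (R := A)).trans
      (ModuleCat.homLinearEquiv.trans (LinearEquiv.congrRight e0))
  | cons x rs ih =>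
    intro L _ _ hreg hN
    rw [RingTheory.Sequence.isWeaklyRegular_cons_iff] at hreg
    obtain ⟨hx, hrs⟩ := hreg
    have hxN : x ∈ Module.annihilator A N := hN x (by simp)
    obtain ⟨ih1, ⟨ih2⟩⟩ := ih (QuotSMulTop x L) hrs (fun y hy => hN y (by simp [hy]))
    let hS := hx.smulShortComplex_shortExact (M := ModuleCat.of A L)
    have van : ∀ j < rs.length + 1,
        ∀ e : Abelian.Ext (ModuleCat.of A N) (ModuleCat.of A L) j, e = 0 := by
      intro j hj e
      rcases j with _ | j
      · have := hS.mono_f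
        apply Abelian.Ext.postcomp_mk₀_injective_of_mono (ModuleCat.of A N)
          ((ModuleCat.of A L).smulShortComplex x).f
        have : ((ModuleCat.of A L).smulShortComplex x).f = x • 𝟙 (ModuleCat.of A L) := by
          ext; rfl
        simp only [this]
        refine Eq.trans ((Abelian.Ext.smul_eq_comp_mk₀ e x).symm.trans (smul_ext_eq_zero hxN e)) ?_
        exact (Abelian.Ext.zero_comp (h := zero_add 0) ..).symm
      · obtain ⟨e', rfl⟩ := comp_extClass_surjective hx hxN rfl e
        rw [ih1 j (by omega) e']
        exact Abelian.Ext.zero_comp ..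
    refine ⟨van, ⟨?_⟩⟩
    let ψ : Abelian.Ext (ModuleCat.of A N) (ModuleCat.of A (QuotSMulTop x L)) rs.length →ₗ[A]
        Abelian.Ext (ModuleCat.of A N) (ModuleCat.of A L) (rs.length + 1) :=
      hS.extClass.postcompOfLinear A (ModuleCat.of A N) rfl
    have hψ : Function.Bijective ψ := by
      constructor
      · rw [injective_iff_map_eq_zero]
        intro e he
        obtain ⟨e2, rfl⟩ := Abelian.Ext.covariant_sequence_exact₃ (ModuleCat.of A N) hS e rfl he
        have h0 : e2 = 0 := van rs.length (by omega) e2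
        rw [h0, Abelian.Ext.zero_comp]
        rfl
      · intro e
        exact comp_extClass_surjective hx hxN rfl e
    exact (LinearEquiv.ofBijective ψ hψ).symm.trans (ih2.trans (LinearEquiv.congrRight
      (Submodule.quotOfListConsSMulTopEquivQuotSMulTopInner L x rs).symm))

/-- If a weakly `L`-regular sequence of length `c` kills `N` and `N → N'` is surjective, then
`Ext^c(N', L) → Ext^c(N, L)` is injective, because `Ext^(c-1)` of the kernel vanishes. -/
theorem precomp_injective {A : Type} [CommRing A] {N N' L : Type} [AddCommGroup N] [Module A N]
    [AddCommGroup N'] [Module A N'] [AddCommGroup L] [Module A L] {rs : List A}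
    (hreg : RingTheory.Sequence.IsWeaklyRegular L rs)
    (hN : ∀ x ∈ rs, x ∈ Module.annihilator A N) (q : N →ₗ[A] N') (hq : Function.Surjective q)
    (e : Abelian.Ext (ModuleCat.of A N') (ModuleCat.of A L) rs.length)
    (h : (Abelian.Ext.mk₀ (ModuleCat.ofHom q)).comp e (zero_add _) = 0) : e = 0 := by
  generalize hr : rs.length = r at e h
  rcases r with _ | r
  · have : Epi (ModuleCat.ofHom q) := (ModuleCat.epi_iff_surjective _).2 hq
    apply Abelian.Ext.precomp_mk₀_injective_of_epi (ModuleCat.of A L) (ModuleCat.ofHom q)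
    exact h.trans (Abelian.Ext.comp_zero (h := zero_add 0) ..).symm
  · obtain ⟨x, rfl⟩ := Abelian.Ext.contravariant_sequence_exact₃
      (LinearMap.shortExact_shortComplexKer hq) (ModuleCat.of A L) e h (Nat.add_comm 1 r)
    have hx : x = 0 := (ext_of_isWeaklyRegular (N := LinearMap.ker q) rs L hreg
      (fun x hx => Module.mem_annihilator.2 fun m => Subtype.ext
        (Module.mem_annihilator.1 (hN x hx) m.1))).1 r (by omega) x
    rw [hx]
    exact Abelian.Ext.comp_zero ..

/-- Each element of a weakly regular sequence raises the bound on the projective dimension by at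
most one. -/
theorem hasProjectiveDimensionLT_quot {A : Type} [CommRing A] (rs : List A) :
    ∀ (L : Type) [AddCommGroup L] [Module A L] (c : ℕ)
    (_hreg : RingTheory.Sequence.IsWeaklyRegular L rs)
    (_hL : HasProjectiveDimensionLT (ModuleCat.of A L) (c + 1)),
    HasProjectiveDimensionLT (ModuleCat.of A (L ⧸ (Ideal.ofList rs • ⊤ : Submodule A L)))
      (c + rs.length + 1) := by
  induction rs with
  | nil =>
    intro L _ _ c _ hL
    have e0 : L ≃ₗ[A] L ⧸ (Ideal.ofList ([] : List A) • ⊤ : Submodule A L) :=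
      (Submodule.quotEquivOfEqBot _ (by rw [Ideal.ofList_nil (R := A), Submodule.bot_smul])).symm
    exact hasProjectiveDimensionLT_of_iso e0.toModuleIso (c + 1)
  | cons x rs ih =>
    intro L _ _ c hreg hL
    rw [RingTheory.Sequence.isWeaklyRegular_cons_iff] at hreg
    obtain ⟨hx, hrs⟩ := hreg
    let hS := hx.smulShortComplex_shortExact (M := ModuleCat.of A L)
    have h1 : HasProjectiveDimensionLT (ModuleCat.of A L) (c + 1 + 1) :=
      hasProjectiveDimensionLT_of_ge _ (c + 1) _ (by omega)
    have h2 : HasProjectiveDimensionLT (ModuleCat.of A (QuotSMulTop x L)) (c + 1 + 1) :=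
      hS.hasProjectiveDimensionLT_X₃ (c + 1) hL h1
    have h3 := ih (QuotSMulTop x L) (c + 1) hrs h2
    have h4 : HasProjectiveDimensionLT (ModuleCat.of A (L ⧸ (Ideal.ofList (x :: rs) • ⊤ :
        Submodule A L))) (c + 1 + rs.length + 1) :=
      hasProjectiveDimensionLT_of_iso
        (Submodule.quotOfListConsSMulTopEquivQuotSMulTopInner L x rs).symm.toModuleIso _
    rwa [show c + (x :: rs).length + 1 = c + 1 + rs.length + 1 by simp; omega]

/-! ### A shear making a polynomial monic in one variable -/

namespace PolyShear
open Polynomial MvPolynomial Ideal Nat RingHom List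

variable {k : Type*} [Field k] {n : ℕ} (f : MvPolynomial (Fin (n + 1)) k)
variable (v w : Fin (n + 1) →₀ ℕ)

variable {f v} in
lemma lt_up (vlt : ∀ i, v i < (2 + f.totalDegree)) : ∀ l ∈ ofFn v, l < (2 + f.totalDegree) := by
  grind

/-- The algebra map sending `X_i` to `X_i + c • X_0 ^ r_i` when `i ≠ 0`, and `X_0` to `X_0`, where
`r_i = (2 + totalDegree f) ^ i`. -/
noncomputable abbrev T1 (c : k) :
    MvPolynomial (Fin (n + 1)) k →ₐ[k] MvPolynomial (Fin (n + 1)) k :=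
  aeval fun i ↦ if i = 0 then X 0 else X i + c • X 0 ^ (2 + f.totalDegree) ^ i.1

lemma t1_comp_t1_neg (c : k) : (T1 f c).comp (T1 f (-c)) = AlgHom.id _ _ := by
  rw [comp_aeval, ← MvPolynomial.aeval_X_left]
  ext i v
  cases i using Fin.cases <;> simp

/-- The shear `T1 f 1` as an algebra automorphism, with inverse `T1 f (-1)`. -/
noncomputable abbrev T := AlgEquiv.ofAlgHom (T1 f 1) (T1 f (-1))
  (t1_comp_t1_neg f 1) (by simpa using t1_comp_t1_neg f (-1))

/-- Exponent vectors bounded by the base `2 + totalDegree f` are determined by the integer whose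
digits they are. -/
lemma sum_r_mul_ne (vlt : ∀ i, v i < (2 + f.totalDegree)) (wlt : ∀ i, w i < (2 + f.totalDegree)) (ne : v ≠ w) :
    ∑ x : Fin (n + 1), (2 + f.totalDegree) ^ x.1 * v x ≠ ∑ x : Fin (n + 1), (2 + f.totalDegree) ^ x.1 * w x := by
  intro h
  refine ne <| Finsupp.ext <| congrFun <| ofFn_inj.mp ?_
  apply ofDigits_inj_of_len_eq (Nat.lt_add_right f.totalDegree one_lt_two)
    (by simp) (lt_up vlt) (lt_up wlt)
  simpa only [ofDigits_eq_sum_mapIdx, mapIdx_eq_ofFn, get_ofFn, length_ofFn,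
    Fin.val_cast, mul_comm, sum_ofFn] using! h

lemma degreeOf_zero_t {a : k} (ha : a ≠ 0) : ((T f) (monomial v a)).degreeOf 0 =
    ∑ i : Fin (n + 1), ((2 + f.totalDegree) ^ i.1) * v i := by
  rw [← natDegree_finSuccEquiv, monomial_eq, Finsupp.prod_pow v fun a ↦ X a]
  simp only [Fin.prod_univ_succ, Fin.sum_univ_succ, map_mul, map_prod, map_pow,
    AlgEquiv.ofAlgHom_apply, MvPolynomial.aeval_C, MvPolynomial.aeval_X, if_pos, Fin.succ_ne_zero,
    ite_false, one_smul, map_add, finSuccEquiv_X_zero, finSuccEquiv_X_succ, algebraMap_eq]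
  have h (i : Fin n) :
      (Polynomial.C (X (R := k) i) + Polynomial.X ^ (2 + f.totalDegree) ^ i.succ.1) ^ v i.succ ≠ 0 :=
    pow_ne_zero (v i.succ) (leadingCoeff_ne_zero.mp <| by simp [add_comm, leadingCoeff_X_pow_add_C])
  rw [natDegree_mul (by simp [ha]) (mul_ne_zero (by simp) (Finset.prod_ne_zero_iff.mpr
    (fun i _ ↦ h i))), natDegree_mul (by simp) (Finset.prod_ne_zero_iff.mpr (fun i _ ↦ h i)),
    natDegree_prod _ _ (fun i _ ↦ h i), natDegree_finSuccEquiv, degreeOf_C]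
  simpa only [natDegree_pow, zero_add, natDegree_X, mul_one, Fin.val_zero, pow_zero, one_mul,
    add_right_inj] using Finset.sum_congr rfl (fun i _ ↦ by
    rw [add_comm (Polynomial.C _), natDegree_X_pow_add_C, mul_comm])

/-- Distinct terms of `f` are sent by the shear to polynomials of distinct degrees in `X_0`, so the
leading terms cannot cancel. -/
lemma degreeOf_t_ne_of_ne (hv : v ∈ f.support) (hw : w ∈ f.support) (ne : v ≠ w) :
    (T f <| monomial v <| coeff v f).degreeOf 0 ≠
    (T f <| monomial w <| coeff w f).degreeOf 0 := by
  rw [degreeOf_zero_t _ _ <| mem_support_iff.mp hv, degreeOf_zero_t _ _ <| mem_support_iff.mp hw]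
  refine sum_r_mul_ne f v w (fun i ↦ ?_) (fun i ↦ ?_) ne <;>
  exact lt_of_le_of_lt ((monomial_le_degreeOf i ‹_›).trans (degreeOf_le_totalDegree f i))
    (by lia)

lemma leadingCoeff_finSuccEquiv_t :
    (finSuccEquiv k n ((T f) ((monomial v) (coeff v f)))).leadingCoeff =
    algebraMap k _ (coeff v f) := by
  rw [monomial_eq, Finsupp.prod_fintype]
  · simp only [map_mul, map_prod, leadingCoeff_mul, leadingCoeff_prod]
    rw [AlgEquiv.ofAlgHom_apply, algHom_C, algebraMap_eq, finSuccEquiv_apply,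
      eval₂Hom_C, coe_comp]
    simp only [AlgEquiv.ofAlgHom_apply, Function.comp_apply, leadingCoeff_C, map_pow,
      leadingCoeff_pow, algebraMap_eq]
    have : ∀ j, ((finSuccEquiv k n) ((T1 f) 1 (X j))).leadingCoeff = 1 := fun j ↦ by
      by_cases h : j = 0
      · simp [h, finSuccEquiv_apply]
      · simp only [aeval_eq_bind₁, bind₁_X_right, if_neg h, one_smul, map_add, map_pow]
        obtain ⟨i, rfl⟩ := Fin.exists_succ_eq.mpr h
        simp [finSuccEquiv_X_succ, finSuccEquiv_X_zero, add_comm]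
    simp only [this, one_pow, Finset.prod_const_one, mul_one]
  exact fun i ↦ pow_zero _

/-- After the shear, `f` is a polynomial in `X_0` with invertible leading coefficient. -/
lemma T_leadingcoeff_isUnit (fne : f ≠ 0) :
    IsUnit (finSuccEquiv k n (T f f)).leadingCoeff := by
  obtain ⟨v, vin, vs⟩ := Finset.exists_max_image f.support
    (fun v ↦ (T f ((monomial v) (coeff v f))).degreeOf 0) (support_nonempty.mpr fne)
  set h := fun w ↦ (MvPolynomial.monomial w) (coeff w f)
  simp only [← natDegree_finSuccEquiv] at vs
  replace vs : ∀ x ∈ f.support \ {v}, (finSuccEquiv k n ((T f) (h x))).degree <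
      (finSuccEquiv k n ((T f) (h v))).degree := by
    intro x hx
    obtain ⟨h1, h2⟩ := Finset.mem_sdiff.mp hx
    apply degree_lt_degree <| lt_of_le_of_ne (vs x h1) ?_
    simpa only [natDegree_finSuccEquiv]
      using degreeOf_t_ne_of_ne f _ _ h1 vin <| ne_of_not_mem_cons h2
  have coeff : (finSuccEquiv k n ((T f) (h v + ∑ x ∈ f.support \ {v}, h x))).leadingCoeff =
      (finSuccEquiv k n ((T f) (h v))).leadingCoeff := by
    simp only [map_add, map_sum]
    rw [add_comm]
    apply leadingCoeff_add_of_degree_lt <| (lt_of_le_of_lt <| degree_sum_le _ _) ?_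
    have h2 : h v ≠ 0 := by simpa [h] using mem_support_iff.mp vin
    replace h2 : (finSuccEquiv k n ((T f) (h v))) ≠ 0 := fun eq ↦ h2 <|
      by simpa only [map_eq_zero_iff _ (AlgEquiv.injective _)] using eq
    exact (Finset.sup_lt_iff <| Ne.bot_lt (fun x ↦ h2 <| degree_eq_bot.mp x)).mpr vs
  nth_rw 2 [← f.support_sum_monomial_coeff]
  rw [Finset.sum_eq_add_sum_sdiff_singleton_of_mem vin h]
  rw [leadingCoeff_finSuccEquiv_t] at coeff
  simpa only [coeff, algebraMap_eq] using (mem_support_iff.mp vin).isUnit.map MvPolynomial.C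

end PolyShear

/-! ### Regular sequences in ideals of given codimension -/

theorem dim_add_le_iff (x : WithBot ℕ∞) (c n : ℕ) :
    x + c ≤ n ↔ x = ⊥ ∨ ∃ d : ℕ, x = d ∧ d + c ≤ n := by
  induction x using WithBot.recBotCoe with
  | bot => simp
  | coe x =>
    induction x using ENat.recTopCoe with
    | top => 
      have h1 : ((⊤ : ℕ∞) : WithBot ℕ∞) + (c : WithBot ℕ∞) = ((⊤ : ℕ∞) : WithBot ℕ∞) := by
        exact congrArg (WithBot.some) (top_add (c : ℕ∞))
      rw [h1]
      constructor
      · intro h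
        have h' : (⊤ : ℕ∞) ≤ n := WithBot.coe_le_coe.1 h
        simp at h'
      · rintro (h | ⟨d, h, _⟩)
        · simp at h
        · have h' : (⊤ : ℕ∞) = d := WithBot.coe_injective h
          simp at h'
    | coe d =>
      constructor
      · intro h
        exact Or.inr ⟨d, rfl, by exact_mod_cast h⟩
      · rintro (h | ⟨d', h, h2⟩)
        · simp at h
        · have h' : (d : ℕ∞) = d' := WithBot.coe_injective h
          have h'' : d = d' := by exact_mod_cast h'
          subst h''
          exact_mod_cast h2

/-- Going up: an integral extension does not lower the dimension. -/
theorem ringKrullDim_le_of_isIntegral {R S : Type} [CommRing R] [CommRing S] (f : R →+* S)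
    (hf : Function.Injective f) (hi : f.IsIntegral) : ringKrullDim R ≤ ringKrullDim S := by
  algebraize [f]
  refine iSup_le fun l => ?_
  obtain ⟨P, -, hP, hPl⟩ := Ideal.exists_ideal_over_prime_of_isIntegral (S := S)
    l.head.asIdeal ⊥ (by
      rw [← RingHom.ker_eq_comap_bot, (RingHom.injective_iff_ker_eq_bot (algebraMap R S)).1 hf]
      exact bot_le)
  have : P.LiesOver l.head.asIdeal := ⟨hPl.symm⟩
  obtain ⟨L, hL, -⟩ := Ideal.exists_ltSeries_of_hasGoingUp l P
  rw [← hL]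
  exact le_iSup (fun p : LTSeries (PrimeSpectrum S) => (p.length : WithBot ℕ∞)) L

theorem isWeaklyRegular_replicate_one {A : Type} [CommRing A] (c : ℕ) :
    ∀ (L : Type) [AddCommGroup L] [Module A L],
      RingTheory.Sequence.IsWeaklyRegular L (List.replicate c (1 : A)) := by
  induction c with
  | zero => intro L _ _; exact RingTheory.Sequence.IsWeaklyRegular.nil A L
  | succ c ih =>
    intro L _ _
    rw [List.replicate_succ, RingTheory.Sequence.isWeaklyRegular_cons_iff]
    exact ⟨IsSMulRegular.one _, ih _⟩

theorem isWeaklyRegular_monic_cons {B : Type} [CommRing B] {g : Polynomial B} (hg : g.Monic)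
    {rs : List B} (h : RingTheory.Sequence.IsWeaklyRegular B rs) :
    RingTheory.Sequence.IsWeaklyRegular (Polynomial B)
      (g :: rs.map (algebraMap B (Polynomial B))) := by
  rw [RingTheory.Sequence.isWeaklyRegular_cons_iff]
  refine ⟨fun a b hab => hg.isRegular.left hab, ?_⟩
  rw [RingTheory.Sequence.isWeaklyRegular_map_algebraMap_iff]
  have e1 : (Polynomial B ⧸ Ideal.span {g}) ≃ₗ[Polynomial B] QuotSMulTop g (Polynomial B) :=
    Submodule.quotEquivOfEq _ _ (by
      ext y
      simp [Ideal.mem_span_singleton', Submodule.mem_smul_pointwise_iff_exists, mul_comm])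
  have := hg.free_quotient
  have e2 : (Polynomial B ⧸ Ideal.span {g}) ≃ₗ[B] QuotSMulTop g (Polynomial B) :=
    e1.restrictScalars B
  rw [← e2.isWeaklyRegular_congr, ← (TensorProduct.rid B (Polynomial B ⧸ Ideal.span {g})).isWeaklyRegular_congr]
  exact h.isWeaklyRegular_lTensor

/-- Induction step on the number of variables: once `I` contains an element that is monic in
one variable up to a unit, a regular sequence in the contraction of `I` to `B` extends by that element.
The dimension hypothesis is inherited since `B ⧸ (J ∩ B) → B[X] ⧸ J` is an integral extension. -/
theorem exists_isWeaklyRegular_step {A B : Type} [CommRing A] [CommRing B]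
    (e : A ≃+* Polynomial B) (c n : ℕ)
    (ih : ∀ J : Ideal B, ringKrullDim (B ⧸ J) + c ≤ n →
      ∃ rs : List B, rs.length = c ∧ (∀ x ∈ rs, x ∈ J) ∧ RingTheory.Sequence.IsWeaklyRegular B rs)
    (I : Ideal A) (hI : ringKrullDim (A ⧸ I) + (c + 1 : ℕ) ≤ (n + 1 : ℕ))
    (f : A) (hf : f ∈ I) (hu : IsUnit (e f).leadingCoeff) :
    ∃ rs : List A, rs.length = c + 1 ∧ (∀ x ∈ rs, x ∈ I) ∧
      RingTheory.Sequence.IsWeaklyRegular A rs := by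
  let J : Ideal (Polynomial B) := I.map (e : A →+* Polynomial B)
  have hJ : ∀ x ∈ J, e.symm x ∈ I := by
    intro x hx
    obtain ⟨y, hy, rfl⟩ := (Ideal.mem_map_iff_of_surjective (e : A →+* Polynomial B)
      e.surjective).1 hx
    rw [RingEquiv.coe_toRingHom, e.symm_apply_apply]
    exact hy
  let g : Polynomial B := hu.unit⁻¹ • e f
  have hg : g.Monic := Polynomial.monic_of_isUnit_leadingCoeff_inv_smul hu
  have hgJ : g ∈ J := Submodule.smul_of_tower_mem _ (hu.unit⁻¹).val
    (Ideal.mem_map_of_mem (e : A →+* Polynomial B) hf)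
  let φ : (B ⧸ J.comap Polynomial.C) →+* Polynomial B ⧸ J :=
    Ideal.quotientMap J Polynomial.C le_rfl
  have h1 : ringKrullDim (B ⧸ J.comap Polynomial.C) ≤ ringKrullDim (A ⧸ I) := by
    rw [ringKrullDim_eq_of_ringEquiv (Ideal.quotientEquiv I J e rfl)]
    refine ringKrullDim_le_of_isIntegral φ Ideal.quotientMap_injective ?_
    have h2 : (φ.comp (Ideal.Quotient.mk _)).IsIntegral := hg.quotient_isIntegral hgJ
    exact RingHom.IsIntegral.tower_top _ _ h2
  have h2 : ringKrullDim (B ⧸ J.comap Polynomial.C) + c ≤ n := by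
    have h3 := (add_le_add_left h1 _).trans hI
    rw [dim_add_le_iff] at h3 ⊢
    rcases h3 with h3 | ⟨d, hd, h3⟩
    · exact Or.inl h3
    · exact Or.inr ⟨d, hd, by omega⟩
  obtain ⟨rs, hl, hrs, hreg⟩ := ih _ h2
  have h4 := isWeaklyRegular_monic_cons hg hreg
  refine ⟨(g :: rs.map (algebraMap B (Polynomial B))).map e.symm, by simp [hl], ?_, ?_⟩
  · intro x hx
    obtain ⟨y, hy, rfl⟩ := List.mem_map.1 hx
    apply hJ
    rcases List.mem_cons.1 hy with rfl | hy
    · exact hgJ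
    · obtain ⟨z, hz, rfl⟩ := List.mem_map.1 hy
      exact hrs z hz
  · refine (AddEquiv.isWeaklyRegular_congr (e := e.symm.toAddEquiv) ?_).1 h4
    rw [List.forall₂_map_right_iff, List.forall₂_same]
    intro x _ y
    exact map_mul e.symm x y

theorem exists_equiv_isUnit_leadingCoeff (k : Type) [Field k] (n : ℕ)
    (f : MvPolynomial (Fin (n + 1)) k) (hf : f ≠ 0) :
    ∃ e : MvPolynomial (Fin (n + 1)) k ≃+* Polynomial (MvPolynomial (Fin n) k),
      IsUnit (e f).leadingCoeff :=
  ⟨((PolyShear.T f).toRingEquiv.trans (MvPolynomial.finSuccEquiv k n).toRingEquiv),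
    PolyShear.T_leadingcoeff_isUnit f hf⟩

/-- An ideal of codimension at least `c` in `k[x₁, …, x_n]` contains a weakly regular sequence of
length `c`. -/
theorem exists_isWeaklyRegular (k : Type) [Field k] (n : ℕ) :
    ∀ (c : ℕ) (I : Ideal (MvPolynomial (Fin n) k)),
    ringKrullDim (MvPolynomial (Fin n) k ⧸ I) + c ≤ n →
    ∃ rs : List (MvPolynomial (Fin n) k), rs.length = c ∧ (∀ x ∈ rs, x ∈ I) ∧
      RingTheory.Sequence.IsWeaklyRegular (MvPolynomial (Fin n) k) rs := by
  induction n with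
  | zero =>
    intro c I h
    rcases c with _ | c
    · exact ⟨[], rfl, by simp, RingTheory.Sequence.IsWeaklyRegular.nil _ _⟩
    have hI : I = ⊤ := by
      rcases (dim_add_le_iff _ _ _).1 h with h | ⟨d, _, h⟩
      · by_contra hI
        have := Ideal.Quotient.nontrivial_iff.2 hI
        have := ringKrullDim_nonneg_of_nontrivial (R := MvPolynomial (Fin 0) k ⧸ I)
        rw [h] at this
        simp at this
      · omega
    exact ⟨List.replicate (c + 1) 1, by simp, by simp [hI], isWeaklyRegular_replicate_one _ _⟩
  | succ n ih =>
    intro c I h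
    rcases c with _ | c
    · exact ⟨[], rfl, by simp, RingTheory.Sequence.IsWeaklyRegular.nil _ _⟩
    have hI : I ≠ ⊥ := by
      rintro rfl
      rw [ringKrullDim_eq_of_ringEquiv (RingEquiv.quotientBot _),
        MvPolynomial.ringKrullDim_of_isNoetherianRing, ringKrullDim_eq_zero_of_field] at h
      simp only [Nat.card_eq_fintype_card, Fintype.card_fin, zero_add] at h
      have : n + 1 + (c + 1) ≤ n + 1 := by exact_mod_cast h
      omega
    obtain ⟨f, hfI, hf⟩ := Submodule.exists_mem_ne_zero_of_ne_bot hI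
    obtain ⟨e, he⟩ := exists_equiv_isUnit_leadingCoeff k n f hf
    exact exists_isWeaklyRegular_step e c n (ih c) I h f hfI he

/-! ### Maximal ideals are generated by regular sequences -/

/-- Every maximal ideal of `R` is generated by a weakly regular sequence of length `c`. -/
def MaxRegular (R : Type) [CommRing R] (c : ℕ) : Prop :=
  ∀ m : Ideal R, m.IsMaximal → ∃ rs : List R, rs.length = c ∧ Ideal.ofList rs = m ∧
    RingTheory.Sequence.IsWeaklyRegular R rs

theorem MaxRegular.of_field (K : Type) [Field K] : MaxRegular K 0 := fun m hm =>
  ⟨[], rfl, by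
    rw [Ideal.ofList_nil]
    exact ((Ideal.eq_bot_or_top m).resolve_right hm.ne_top).symm,
    RingTheory.Sequence.IsWeaklyRegular.nil K K⟩

theorem MaxRegular.of_ringEquiv {R S : Type} [CommRing R] [CommRing S] (e : R ≃+* S) {c : ℕ}
    (h : MaxRegular R c) : MaxRegular S c := by
  intro m hm
  have : (m.comap (e : R →+* S)).IsMaximal := Ideal.comap_isMaximal_of_surjective _ e.surjective
  obtain ⟨rs, hl, hrs, hreg⟩ := h _ this
  refine ⟨rs.map e, by rw [List.length_map, hl], ?_, ?_⟩
  · have h1 := Ideal.map_ofList (e : R →+* S) rs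
    rw [hrs, Ideal.map_comap_of_surjective (e : R →+* S) e.surjective] at h1
    exact h1.symm
  · refine (AddEquiv.isWeaklyRegular_congr (e := e.toAddEquiv) (as := rs) (bs := rs.map e) ?_).1 hreg
    rw [List.forall₂_map_right_iff, List.forall₂_same]
    intro x _ y
    simp

/-- The contraction to `R` of a maximal ideal `m` of `R[X]` is a maximal ideal `m₀`, and
`(R/m₀)[X]` is a principal ideal domain: a lift `g` of a generator of the image of `m` extends the
regular sequence generating `m₀`. -/
theorem MaxRegular.polynomial {R : Type} [CommRing R] [IsJacobsonRing R] {c : ℕ}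
    (h : MaxRegular R c) : MaxRegular (Polynomial R) (c + 1) := by
  intro m hm
  have hm0 : (m.comap (Polynomial.C : R →+* Polynomial R)).IsMaximal :=
    Polynomial.isMaximal_comap_C_of_isJacobsonRing m
  obtain ⟨rs, hl, hrs, hreg⟩ := h _ hm0
  set m0 := m.comap (Polynomial.C : R →+* Polynomial R) with hm0def
  let _ : Field (R ⧸ m0) := Ideal.Quotient.field m0
  let φ := Polynomial.mapRingHom (Ideal.Quotient.mk m0)
  have hφ : Function.Surjective φ := Polynomial.map_surjective _ Ideal.Quotient.mk_surjective
  have hker : RingHom.ker φ = Ideal.ofList (rs.map Polynomial.C) := by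
    rw [Polynomial.ker_mapRingHom, Ideal.mk_ker, ← Ideal.map_ofList, hrs]
  have hkm : RingHom.ker φ ≤ m := by
    rw [hker, ← Ideal.map_ofList, hrs]
    exact Ideal.map_comap_le
  have hJ : (m.map φ).IsMaximal :=
    (Ideal.map_eq_top_or_isMaximal_of_surjective φ hφ hm).resolve_left fun ht => hm.ne_top (by
      rw [← Ideal.comap_top (f := φ), ← ht, Ideal.comap_map_of_surjective' φ hφ,
        sup_eq_left.2 hkm])
  obtain ⟨gb, hgb⟩ := (IsPrincipalIdealRing.principal (m.map φ)).principal
  obtain ⟨g, rfl⟩ := hφ gb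
  have hg0 : φ g ≠ 0 := by
    intro h0
    rw [h0] at hgb
    exact Ring.ne_bot_of_isMaximal_of_not_isField hJ (Polynomial.not_isField _)
      (hgb.trans (by simp))
  refine ⟨rs.map Polynomial.C ++ [g], by simp [hl], ?_, ?_⟩
  · have h1 : (m.map φ).comap φ = m := by
      rw [Ideal.comap_map_of_surjective' φ hφ, sup_eq_left.2 hkm]
    have h2 : m.map φ = (Ideal.span {g}).map φ := by
      rw [Ideal.map_span, Set.image_singleton]; exact hgb
    rw [Ideal.ofList_append, Ideal.ofList_singleton, ← hker, ← h1, h2,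
      Ideal.comap_map_of_surjective' φ hφ, sup_comm]
  · rw [RingTheory.Sequence.isWeaklyRegular_append_iff,
      RingTheory.Sequence.isWeaklyRegular_singleton_iff]
    refine ⟨?_, ?_⟩
    · have := hreg.of_flat (S := Polynomial R)
      exact this
    · rw [isSMulRegular_iff_right_eq_zero_of_smul]
      intro x hx
      obtain ⟨y, rfl⟩ := Submodule.Quotient.mk_surjective _ x
      rw [← Submodule.Quotient.mk_smul, Submodule.Quotient.mk_eq_zero] at hx
      rw [Submodule.Quotient.mk_eq_zero]
      simp only [smul_eq_mul, Ideal.mul_top, ← hker, RingHom.mem_ker, map_mul] at hx ⊢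
      exact (mul_eq_zero.1 hx).resolve_left hg0

theorem MaxRegular.mvPolynomial (k : Type) [Field k] (n : ℕ) :
    MaxRegular (MvPolynomial (Fin n) k) n := by
  induction n with
  | zero => exact (MaxRegular.of_field k).of_ringEquiv (MvPolynomial.isEmptyRingEquiv k _).symm
  | succ n ih => exact ih.polynomial.of_ringEquiv (MvPolynomial.finSuccEquiv k n).symm.toRingEquiv

/-! ### Dévissage and vanishing of `Ext^j(-, A)` in large degrees -/

theorem shortExact_mk_ofHom {A : Type} [CommRing A] {N₁ N₂ N₃ : Type} [AddCommGroup N₁]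
    [Module A N₁] [AddCommGroup N₂] [Module A N₂] [AddCommGroup N₃] [Module A N₃]
    {f : N₁ →ₗ[A] N₂} {g : N₂ →ₗ[A] N₃} (hf : Function.Injective f) (hg : Function.Surjective g)
    (hfg : Function.Exact f g) :
    (ShortComplex.mk (ModuleCat.ofHom f) (ModuleCat.ofHom g)
      (by rw [← ModuleCat.ofHom_comp, hfg.linearMap_comp_eq_zero]; rfl)).ShortExact := by
  have := (ModuleCat.mono_iff_injective (ModuleCat.ofHom f)).2 hf
  have := (ModuleCat.epi_iff_surjective (ModuleCat.ofHom g)).2 hg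
  exact { exact := (ShortComplex.ShortExact.moduleCat_exact_iff_function_exact _).2 hfg
          mono_f := ‹_›
          epi_g := ‹_› }

/-- For `0 → N₁ → N₂ → N₃ → 0` exact, the middle term of the long exact sequence is killed by the
product of the annihilators of its neighbours. -/
theorem annihilator_mul_le_ext {A : Type} [CommRing A] {N₁ N₂ N₃ : Type} [AddCommGroup N₁]
    [Module A N₁] [AddCommGroup N₂] [Module A N₂] [AddCommGroup N₃] [Module A N₃]
    {f : N₁ →ₗ[A] N₂} {g : N₂ →ₗ[A] N₃} (hf : Function.Injective f) (hg : Function.Surjective g)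
    (hfg : Function.Exact f g) (Y : ModuleCat.{0} A) (j : ℕ) :
    Module.annihilator A (Abelian.Ext (ModuleCat.of A N₁) Y j) *
        Module.annihilator A (Abelian.Ext (ModuleCat.of A N₃) Y j) ≤
      Module.annihilator A (Abelian.Ext (ModuleCat.of A N₂) Y j) := by
  rw [Ideal.mul_le]
  intro a ha b hb
  rw [Module.mem_annihilator] at ha hb ⊢
  intro e
  obtain ⟨e', he'⟩ := Abelian.Ext.contravariant_sequence_exact₂ (shortExact_mk_ofHom hf hg hfg) Y
    (a • e) ((Abelian.Ext.comp_smul ..).trans (ha _))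
  rw [mul_comm, mul_smul, ← he', ← Abelian.Ext.comp_smul]
  have h0 : b • e' = 0 := hb e'
  rw [h0]
  exact Abelian.Ext.comp_zero ..

theorem annihilator_ext_equiv {A : Type} [CommRing A] {N N' : Type} [AddCommGroup N]
    [Module A N] [AddCommGroup N'] [Module A N'] (e : N ≃ₗ[A] N') (Y : ModuleCat.{0} A) (j : ℕ) :
    Module.annihilator A (Abelian.Ext (ModuleCat.of A N') Y j) ≤
      Module.annihilator A (Abelian.Ext (ModuleCat.of A N) Y j) := by
  intro a ha
  rw [Module.mem_annihilator] at ha ⊢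
  intro x
  have h1 : (Abelian.Ext.mk₀ (ModuleCat.ofHom (e : N →ₗ[A] N'))).comp
      ((Abelian.Ext.mk₀ (ModuleCat.ofHom (e.symm : N' →ₗ[A] N))).comp x (zero_add j))
      (zero_add j) = x := by
    rw [Abelian.Ext.mk₀_comp_mk₀_assoc, ← ModuleCat.ofHom_comp]
    simp
  rw [← h1, ← Abelian.Ext.comp_smul, ha]
  exact Abelian.Ext.comp_zero ..

theorem annihilator_ext_of_subsingleton {A : Type} [CommRing A] {N : Type} [AddCommGroup N]
    [Module A N] [Subsingleton N] (Y : ModuleCat.{0} A) (j : ℕ) :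
    Module.annihilator A (Abelian.Ext (ModuleCat.of A N) Y j) = ⊤ := by
  rw [eq_top_iff]
  intro a _
  rw [Module.mem_annihilator]
  intro x
  exact smul_ext_eq_zero (Module.mem_annihilator.2 fun _ => Subsingleton.elim _ _) x

theorem ext_eq_zero_of_annihilator_eq_top {A : Type} [CommRing A] {X Y : ModuleCat.{0} A} {j : ℕ}
    (h : Module.annihilator A (Abelian.Ext X Y j) = ⊤) (e : Abelian.Ext X Y j) : e = 0 := by
  rw [← one_smul A e]
  exact Module.mem_annihilator.1 (h ▸ Submodule.mem_top) e

theorem annihilator_ext_eq_top {A : Type} [CommRing A] {X Y : ModuleCat.{0} A} {j : ℕ}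
    (h : ∀ e : Abelian.Ext X Y j, e = 0) : Module.annihilator A (Abelian.Ext X Y j) = ⊤ := by
  rw [eq_top_iff]
  intro a _
  rw [Module.mem_annihilator]
  intro x
  rw [h x, smul_zero]

theorem precomp_smul_id {A : Type} [CommRing A] {X Y : ModuleCat.{0} A} (x : A) (f : X ⟶ X)
    (hf : f = x • 𝟙 X) {j : ℕ} (e : Abelian.Ext X Y j) :
    (Abelian.Ext.mk₀ f).comp e (zero_add j) = x • e := by
  rw [hf, Abelian.Ext.mk₀_smul, Abelian.Ext.smul_comp, Abelian.Ext.mk₀_id_comp]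

/-- Dévissage: let `S` and `p` be upward closed properties of ideals, `S` also stable under
products and true of `⊤`. If `S` holds for the annihilator of `Ext^j(A/q, Y)` for every prime `q`
satisfying `p`, then it holds for that of `Ext^j(N, Y)` for every finitely generated `N` whose
annihilator satisfies `p`. -/
theorem annihilator_ext_devissage {A : Type} [CommRing A] [IsNoetherianRing A]
    (Y : ModuleCat.{0} A) (j : ℕ) (S : Ideal A → Prop) (hmono : ∀ I J, I ≤ J → S I → S J)
    (hmul : ∀ I J, S I → S J → S (I * J)) (htop : S ⊤) (p : Ideal A → Prop)
    (hp : ∀ I J, I ≤ J → p I → p J)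
    (h : ∀ q : Ideal A, q.IsPrime → p q →
      S (Module.annihilator A (Abelian.Ext (ModuleCat.of A (A ⧸ q)) Y j)))
    (N : Type) [AddCommGroup N] [Module A N] [hN : Module.Finite A N]
    (hpN : p (Module.annihilator A N)) :
    S (Module.annihilator A (Abelian.Ext (ModuleCat.of A N) Y j)) := by
  revert hpN
  induction hN using IsNoetherianRing.induction_on_isQuotientEquivQuotientPrime A with
  | subsingleton N => intro _; rw [annihilator_ext_of_subsingleton]; exact htop
  | quotient N q e =>
    intro hpN
    refine hmono _ _ (annihilator_ext_equiv e Y j) (h q.1 q.2 ?_)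
    rwa [e.annihilator_eq, Ideal.annihilator_quotient] at hpN
  | exact N₁ N₂ N₃ f g hf hg hfg h₁ h₃ =>
    intro hpN
    exact hmono _ _ (annihilator_mul_le_ext hf hg hfg Y j)
      (hmul _ _ (h₁ (hp _ _ (f.annihilator_le_of_injective hf) hpN))
        (h₃ (hp _ _ (g.annihilator_le_of_surjective hg) hpN)))

open scoped Pointwise in
/-- If every maximal ideal of `A` is generated by a regular sequence of length `n`, then
`Ext^j(N, A) = 0` for all `j > n` and all finitely generated `N`. For `N = A/p` with `p` maximal
this is the Koszul bound on the projective dimension; for other primes it follows by Noetherian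
induction and Nakayama's lemma. -/
theorem ext_eq_zero_of_maxRegular {A : Type} [CommRing A] [IsNoetherianRing A] {n : ℕ}
    (hA : MaxRegular A n) {j : ℕ} (hj : n < j) (N : Type) [AddCommGroup N] [Module A N]
    [Module.Finite A N] (e : Abelian.Ext (ModuleCat.of A N) (ModuleCat.of A A) j) : e = 0 := by
  let S : Ideal A → Prop := fun I => I = ⊤
  have hmono : ∀ I J, I ≤ J → S I → S J := fun I J h hI => top_le_iff.1 (hI ▸ h)
  have hmul : ∀ I J, S I → S J → S (I * J) := fun I J hI hJ => by
    simp only [S] at hI hJ ⊢; rw [hI, hJ, Ideal.mul_top]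
  have key : ∀ p : Ideal A, p.IsPrime → ∀ j, n < j →
      ∀ e : Abelian.Ext (ModuleCat.of A (A ⧸ p)) (ModuleCat.of A A) j, e = 0 := by
    intro p
    refine IsNoetherian.induction (R := A) (M := A) (P := fun p : Ideal A => p.IsPrime →
      ∀ j, n < j → ∀ e : Abelian.Ext (ModuleCat.of A (A ⧸ p)) (ModuleCat.of A A) j, e = 0) ?_ p
    clear p
    intro (p : Ideal A) ih hp j hj e
    by_cases hmax : p.IsMaximal
    · obtain ⟨rs, hl, rfl, hreg⟩ := hA p hmax
      have h1 := hasProjectiveDimensionLT_quot rs A 0 hreg inferInstance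
      have h2 : (Ideal.ofList rs • ⊤ : Ideal A) = Ideal.ofList rs := by simp
      rw [h2] at h1
      exact Abelian.Ext.eq_zero_of_hasProjectiveDimensionLT e (0 + rs.length + 1) (by omega)
    · obtain ⟨m, hm, hpm⟩ := Ideal.exists_le_maximal p hp.ne_top
      have hlt : p < m := lt_of_le_of_ne hpm fun h => hmax (h ▸ hm)
      obtain ⟨x, hxm, hxp⟩ := SetLike.exists_of_lt hlt
      -- Multiplication by `x ∉ p` is surjective on `Ext^j(A/p, A)`, because the cokernel embeds into
      -- `Ext^(j+1)(A/(p + (x)), A)`, which vanishes by induction.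
      have hdiv : ∀ x ∉ p, ∀ e : Abelian.Ext (ModuleCat.of A (A ⧸ p)) (ModuleCat.of A A) j,
          ∃ e', x • e' = e := by
        intro x hxp e
        have hreg : IsSMulRegular (A ⧸ p) x := by
          rw [isSMulRegular_iff_right_eq_zero_of_smul]
          intro y hy
          obtain ⟨y, rfl⟩ := Ideal.Quotient.mk_surjective y
          have hy' : Ideal.Quotient.mk p (x * y) = 0 := hy
          rw [Ideal.Quotient.eq_zero_iff_mem] at hy' ⊢
          exact (hp.mem_or_mem hy').resolve_left hxp
        have hS := hreg.smulShortComplex_shortExact (M := ModuleCat.of A (A ⧸ p))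
        have hann : p < Module.annihilator A (QuotSMulTop x (A ⧸ p)) := by
          have hxa : x ∈ Module.annihilator A (QuotSMulTop x (A ⧸ p)) := by
            rw [Module.mem_annihilator]
            intro z
            obtain ⟨z, rfl⟩ := Submodule.Quotient.mk_surjective _ z
            rw [← Submodule.Quotient.mk_smul, Submodule.Quotient.mk_eq_zero]
            exact Submodule.smul_mem_pointwise_smul _ _ _ trivial
          refine lt_of_le_of_ne ?_ fun h => hxp (h ▸ hxa)
          have := (Submodule.mkQ (x • (⊤ : Submodule A (A ⧸ p)))).annihilator_le_of_surjective
            (Submodule.mkQ_surjective _)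
          rwa [Ideal.annihilator_quotient] at this
        have hz : hS.extClass.comp e (Nat.add_comm 1 j) = 0 := by
          refine ext_eq_zero_of_annihilator_eq_top ?_ _
          exact annihilator_ext_devissage (ModuleCat.of A A) (j + 1) S hmono hmul rfl
            (fun I => p < I) (fun I J h h' => h'.trans_le h)
            (fun q hq hpq => annihilator_ext_eq_top (ih q hpq hq (j + 1) (by omega)))
            (QuotSMulTop x (A ⧸ p)) hann
        obtain ⟨e', he'⟩ := Abelian.Ext.contravariant_sequence_exact₁ hS _ e (Nat.add_comm 1 j) hz
        refine ⟨e', ?_⟩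
        rw [← he']
        have : ((ModuleCat.of A (A ⧸ p)).smulShortComplex x).f
            = x • 𝟙 (ModuleCat.of A (A ⧸ p)) := by ext; rfl
        exact (precomp_smul_id _ _ this e').symm
      obtain ⟨r, hr1, hr⟩ := Submodule.exists_sub_one_mem_and_smul_eq_zero_of_fg_of_le_smul
        (Ideal.span {x}) (⊤ : Submodule A (Abelian.Ext (ModuleCat.of A (A ⧸ p))
          (ModuleCat.of A A) j)) Module.Finite.fg_top (by
          intro e _
          obtain ⟨e', rfl⟩ := hdiv x hxp e
          exact Submodule.smul_mem_smul (Ideal.mem_span_singleton_self x) trivial)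
      -- Nakayama gives `r ≡ 1` modulo `x` killing `Ext^j(A/p, A)`; since `x` lies in the maximal ideal
      -- `m ⊇ p`, this `r` is outside `p`, hence also acts surjectively.
      have hrp : r ∉ p := fun h => hm.ne_top ((Ideal.eq_top_iff_one _).2 (by
        have h2 := (Ideal.span_singleton_le_iff_mem m).2 hxm hr1
        have h3 := m.sub_mem (hpm h) h2
        rwa [sub_sub_cancel] at h3))
      obtain ⟨e', rfl⟩ := hdiv r hrp e
      exact hr e' trivial
  refine ext_eq_zero_of_annihilator_eq_top ?_ e
  exact annihilator_ext_devissage (ModuleCat.of A A) j S hmono hmul rfl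
    (fun _ => True) (fun _ _ _ _ => trivial)
    (fun q hq _ => annihilator_ext_eq_top (key q hq j hj)) N trivial

/-! ### Codimension of ideals -/

/-- The ideal `I` has codimension at least `c` in a ring `R` of dimension `n`, i.e.
`dim R/I ≤ n - c`. The condition is imposed on the primes containing `I`, so that it visibly depends
only on the closed set `V(I)` and is stable under products; it holds for `I = ⊤` and every `c`. -/
def CodimGE {R : Type} [CommRing R] (n c : ℕ) (I : Ideal R) : Prop :=
  ∀ p : Ideal R, p.IsPrime → I ≤ p → ringKrullDim (R ⧸ p) + c ≤ n

theorem ringKrullDim_quotient_anti {R : Type} [CommRing R] {I J : Ideal R} (h : I ≤ J) :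
    ringKrullDim (R ⧸ J) ≤ ringKrullDim (R ⧸ I) :=
  ringKrullDim_le_of_surjective (Ideal.Quotient.factor h) (Ideal.Quotient.factor_surjective h)

theorem codimGE_iff {R : Type} [CommRing R] {n c : ℕ} {I : Ideal R} :
    CodimGE n c I ↔ ringKrullDim (R ⧸ I) + c ≤ n := by
  constructor
  · intro h
    by_cases hI : I = ⊤
    · subst hI
      exact (dim_add_le_iff _ _ _).2 (Or.inl ringKrullDim_eq_bot_of_subsingleton)
    have hcn : c ≤ n := by
      obtain ⟨m, hm, hIm⟩ := Ideal.exists_le_maximal I hI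
      rcases (dim_add_le_iff _ _ _).1 (h m hm.isPrime hIm) with h | ⟨d, _, h⟩
      · have := ringKrullDim_nonneg_of_nontrivial (R := R ⧸ m)
        rw [h] at this
        simp at this
      · omega
    -- A chain of primes containing `I` is a chain of primes containing its smallest member.
    have key : ringKrullDim (R ⧸ I) ≤ ((n - c : ℕ) : WithBot ℕ∞) := by
      rw [ringKrullDim_quotient]
      refine iSup_le fun l => ?_
      have h1 : (l.length : WithBot ℕ∞) ≤ ringKrullDim (R ⧸ l.head.1.asIdeal) := by
        rw [ringKrullDim_quotient]
        let l' : LTSeries (PrimeSpectrum.zeroLocus (l.head.1.asIdeal : Set R)) :=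
          { length := l.length
            toFun := fun i => ⟨(l i).1, (LTSeries.head_le l i : l.head ≤ l i)⟩
            step := fun i => l.step i }
        exact le_iSup (fun p : LTSeries (PrimeSpectrum.zeroLocus (l.head.1.asIdeal : Set R)) =>
          (p.length : WithBot ℕ∞)) l'
      have h2 := h l.head.1.asIdeal l.head.1.isPrime l.head.2
      have h3 := (add_le_add_left h1 (c : WithBot ℕ∞)).trans h2
      have h4 : l.length + c ≤ n := by exact_mod_cast h3
      have h5 : l.length ≤ n - c := by omega
      exact_mod_cast h5
    refine (add_le_add_left key _).trans ?_
    have : n - c + c ≤ n := by omega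
    exact_mod_cast this
  · intro h p _ hIp
    exact (add_le_add_left (ringKrullDim_quotient_anti hIp) _).trans h

theorem CodimGE.mono {R : Type} [CommRing R] {n c : ℕ} {I J : Ideal R} (h : CodimGE n c I)
    (hIJ : I ≤ J) : CodimGE n c J := fun p hp hJp => h p hp (hIJ.trans hJp)

theorem CodimGE.mul {R : Type} [CommRing R] {n c : ℕ} {I J : Ideal R} (hI : CodimGE n c I)
    (hJ : CodimGE n c J) : CodimGE n c (I * J) := fun p hp h =>
  (hp.mul_le.1 h).elim (hI p hp) (hJ p hp)

theorem CodimGE.inf {R : Type} [CommRing R] {n c : ℕ} {I J : Ideal R} (hI : CodimGE n c I)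
    (hJ : CodimGE n c J) : CodimGE n c (I ⊓ J) := (hI.mul hJ).mono Ideal.mul_le_inf

theorem CodimGE.le {R : Type} [CommRing R] {n c c' : ℕ} {I : Ideal R} (hI : CodimGE n c I)
    (h : c' ≤ c) : CodimGE n c' I := fun p hp hIp =>
  (add_le_add_right (by exact_mod_cast h) _).trans (hI p hp hIp)

/-- Each element of a weakly regular sequence lowers the dimension of the support. -/
theorem supportDim_add_length_le {A : Type} [CommRing A] [IsNoetherianRing A] (rs : List A) :
    ∀ (L : Type) [AddCommGroup L] [Module A L] [Module.Finite A L]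
    (_h : RingTheory.Sequence.IsWeaklyRegular L rs),
    Module.supportDim A (L ⧸ (Ideal.ofList rs • ⊤ : Submodule A L)) + rs.length ≤
      Module.supportDim A L := by
  induction rs with
  | nil =>
    intro L _ _ _ _
    rw [Module.supportDim_eq_of_equiv (Submodule.quotEquivOfEqBot _
      (by rw [Ideal.ofList_nil (R := A), Submodule.bot_smul]))]
    simp
  | cons x rs ih =>
    intro L _ _ _ h
    rw [RingTheory.Sequence.isWeaklyRegular_cons_iff] at h
    rw [Module.supportDim_eq_of_equiv
      (Submodule.quotOfListConsSMulTopEquivQuotSMulTopInner L x rs)]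
    have h1 := ih (QuotSMulTop x L) h.2
    have h2 := Module.supportDim_quotSMulTop_succ_le_of_notMem_minimalPrimes (R := A) (M := L)
      (x := x) (fun _ hp => h.1.notMem_of_mem_minimalPrimes hp)
    refine le_trans ?_ ((add_le_add_left h1 1).trans h2)
    rw [List.length_cons, Nat.cast_add, Nat.cast_one, add_assoc]

section
variable {k : Type} [Field k] {n : ℕ}

local notation "A" => MvPolynomial (Fin n) k

theorem codimGE_ofList {rs : List A} (h : RingTheory.Sequence.IsWeaklyRegular A rs) :
    CodimGE n rs.length (Ideal.ofList rs) := by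
  rw [codimGE_iff]
  have h1 := supportDim_add_length_le rs A h
  rw [Module.supportDim_self_eq_ringKrullDim, MvPolynomial.ringKrullDim_of_isNoetherianRing,
    ringKrullDim_eq_zero_of_field] at h1
  have h2 : (Ideal.ofList rs • ⊤ : Ideal A) = Ideal.ofList rs := by simp
  rw [h2, Module.supportDim_quotient_eq_ringKrullDim] at h1
  simpa using h1

/-- If `I` contains a weakly regular sequence `rs` of length `c` but does not have codimension
`c + 1`, then `A/rs` has a nonzero element killed by `I`: otherwise `I` contains an element regular on
`A/rs`, which prolongs the sequence. -/
theorem exists_ne_zero_of_not_codimGE {rs : List A}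
    (h : RingTheory.Sequence.IsWeaklyRegular A rs) {I : Ideal A} (hrs : ∀ x ∈ rs, x ∈ I)
    (hI : ¬ CodimGE n (rs.length + 1) I) :
    ∃ b : A ⧸ (Ideal.ofList rs • ⊤ : Submodule A A), b ≠ 0 ∧ ∀ x ∈ I, x • b = 0 := by
  by_contra! hb
  apply hI
  have hs : Subsingleton ((A ⧸ I) →ₗ[A] A ⧸ (Ideal.ofList rs • ⊤ : Submodule A A)) := by
    refine subsingleton_of_forall_eq 0 fun φ => ?_
    by_contra hφ
    have h1 : φ (Ideal.Quotient.mk I 1) ≠ 0 := by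
      intro h0
      apply hφ
      refine LinearMap.ext fun y => ?_
      obtain ⟨y, rfl⟩ := Ideal.Quotient.mk_surjective y
      have : Ideal.Quotient.mk I y = y • Ideal.Quotient.mk I 1 :=
        congrArg (Ideal.Quotient.mk I) (mul_one y).symm
      rw [this, map_smul, h0, smul_zero, LinearMap.zero_apply]
    obtain ⟨x, hx, hx'⟩ := hb _ h1
    apply hx'
    rw [← map_smul]
    have : x • Ideal.Quotient.mk I 1 = 0 :=
      (congrArg (Ideal.Quotient.mk I) (mul_one x)).trans (Ideal.Quotient.eq_zero_iff_mem.2 hx)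
    rw [this, map_zero]
  obtain ⟨y, hy, hreg⟩ := IsSMulRegular.subsingleton_linearMap_iff.1 hs
  rw [Ideal.annihilator_quotient] at hy
  have h2 : RingTheory.Sequence.IsWeaklyRegular A (rs ++ [y]) := by
    rw [RingTheory.Sequence.isWeaklyRegular_append_iff,
      RingTheory.Sequence.isWeaklyRegular_singleton_iff]
    exact ⟨h, hreg⟩
  have h3 := codimGE_ofList h2
  rw [List.length_append, List.length_singleton] at h3
  refine h3.mono (Ideal.span_le.2 fun x hx => ?_)
  rcases List.mem_append.1 hx with hx | hx
  · exact hrs x hx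
  · rw [List.mem_singleton.1 hx]; exact hy

theorem exists_isWeaklyRegular_of_codimGE {c : ℕ} {I : Ideal A} (h : CodimGE n c I) :
    ∃ rs : List A, rs.length = c ∧ (∀ x ∈ rs, x ∈ I) ∧
      RingTheory.Sequence.IsWeaklyRegular A rs :=
  exists_isWeaklyRegular k n c I (codimGE_iff.1 h)

/-- `A/rs` is unmixed: a nonzero element of the quotient by a weakly regular sequence of length `c`
is not killed by an ideal of codimension `c + 1`. Otherwise the inclusion of the submodule `N` it spans
would be a nonzero element of `Hom(N, A/rs) ≃ Ext^c(N, A) = 0`. -/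
theorem not_codimGE_of_ne_zero {rs : List A}
    (h : RingTheory.Sequence.IsWeaklyRegular A rs)
    {b : A ⧸ (Ideal.ofList rs • ⊤ : Submodule A A)} (hb : b ≠ 0) {I : Ideal A}
    (hI : ∀ x ∈ I, x • b = 0) : ¬ CodimGE n (rs.length + 1) I := by
  intro hc
  obtain ⟨rs', hl, hrs', hreg'⟩ := exists_isWeaklyRegular_of_codimGE hc
  let N := Submodule.span A {b}
  have hann : ∀ x : A, x • b = 0 → x ∈ Module.annihilator A N := by
    intro x hx
    change x ∈ Submodule.annihilator N
    rwa [Submodule.mem_annihilator_span_singleton]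
  have van := (ext_of_isWeaklyRegular (N := N) rs' A hreg'
    (fun x hx => hann x (hI x (hrs' x hx)))).1 rs.length (by omega)
  obtain ⟨e⟩ := (ext_of_isWeaklyRegular (N := N) rs A h (fun x hx => hann x (by
    obtain ⟨y, rfl⟩ := Submodule.Quotient.mk_surjective _ b
    rw [← Submodule.Quotient.mk_smul, Submodule.Quotient.mk_eq_zero]
    exact Submodule.smul_mem_smul (Ideal.subset_span hx) trivial))).2
  have h0 : N.subtype = 0 := by
    rw [← e.apply_symm_apply N.subtype, van (e.symm N.subtype), map_zero]
  exact hb (LinearMap.congr_fun h0 ⟨b, Submodule.mem_span_singleton_self b⟩)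
theorem codimGE_zero (q : Ideal A) : CodimGE n 0 q := by
  rw [codimGE_iff]
  have := ringKrullDim_quotient_le q
  rw [MvPolynomial.ringKrullDim_of_isNoetherianRing, ringKrullDim_eq_zero_of_field] at this
  simpa using this

/-! ### Codimension of `Ext^j(N, A)` -/

theorem ext_eq_zero_of_lt {j : ℕ} (hj : n < j) (N : Type) [AddCommGroup N] [Module A N]
    [Module.Finite A N] (e : Abelian.Ext (ModuleCat.of A N) (ModuleCat.of A A) j) : e = 0 :=
  ext_eq_zero_of_maxRegular (MaxRegular.mvPolynomial k n) hj N e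

theorem codimGE_top {c : ℕ} : CodimGE n c (⊤ : Ideal A) := fun _ hp h =>
  absurd (top_le_iff.1 h) hp.ne_top

/-- The module `Ext^j(N, A)` has codimension at least `j`. The proof is by descending induction on
`j`, starting above `n` where the module vanishes, and by dévissage to `N = A/q`. -/
theorem codimGE_annihilator_ext (j : ℕ) (N : Type) [AddCommGroup N] [Module A N]
    [Module.Finite A N] :
    CodimGE n j (Module.annihilator A (Abelian.Ext (ModuleCat.of A N) (ModuleCat.of A A) j)) := by
  suffices H : ∀ i j, n + 1 = i + j → ∀ (N : Type) [AddCommGroup N] [Module A N]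
      [Module.Finite A N], CodimGE n j
        (Module.annihilator A (Abelian.Ext (ModuleCat.of A N) (ModuleCat.of A A) j)) by
    by_cases h : n < j
    · rw [annihilator_ext_eq_top (ext_eq_zero_of_lt h N)]
      exact codimGE_top
    · exact H (n + 1 - j) j (by omega) N
  intro i
  induction i with
  | zero =>
    intro j hj N _ _ _
    rw [annihilator_ext_eq_top (ext_eq_zero_of_lt (by omega) N)]
    exact codimGE_top
  | succ i ih =>
    intro j hj N _ _ _
    refine annihilator_ext_devissage (ModuleCat.of A A) j (CodimGE n j) (fun I J h hI => hI.mono h)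
      (fun I J => CodimGE.mul) codimGE_top (fun _ => True) (fun _ _ _ _ => trivial) ?_ N trivial
    intro q hq _
    by_cases hc : CodimGE n j q
    · refine hc.mono fun a ha => Module.mem_annihilator.2 fun e => smul_ext_eq_zero ?_ e
      rwa [Ideal.annihilator_quotient]
    -- `c` is the codimension of `q`.
    obtain ⟨c, hcj, hcq, hncq⟩ : ∃ c < j, CodimGE n c q ∧ ¬ CodimGE n (c + 1) q := by
      by_contra! h
      apply hc
      have : ∀ c ≤ j, CodimGE n c q := by
        intro c
        induction c with
        | zero => exact fun _ => codimGE_zero q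
        | succ c ihc => intro hc; exact h c (by omega) (ihc (by omega))
      exact this j le_rfl
    obtain ⟨rs, hl, hrs, hreg⟩ := exists_isWeaklyRegular_of_codimGE hcq
    subst hl
    obtain ⟨b, hb, hbq⟩ := exists_ne_zero_of_not_codimGE hreg hrs hncq
    -- The annihilator of `b` is exactly `q`, since an ideal strictly larger than `q` has codimension
    -- `c + 1` and cannot kill `b`. So `A/q` embeds into `A/rs`.
    have hann : ∀ a : A, a • b = 0 → a ∈ q := by
      intro a ha
      by_contra haq
      refine not_codimGE_of_ne_zero hreg hb (I := q ⊔ Ideal.span {a}) ?_ ?_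
      · intro x hx
        obtain ⟨y, hy, z, hz, rfl⟩ := Submodule.mem_sup.1 hx
        obtain ⟨z, rfl⟩ := Ideal.mem_span_singleton'.1 hz
        rw [add_smul, mul_smul, ha, hbq y hy, smul_zero, add_zero]
      · rw [codimGE_iff] at hcq ⊢
        have h1 := ringKrullDim_succ_le_of_surjective
          (Ideal.Quotient.factor (le_sup_left : q ≤ q ⊔ Ideal.span {a}))
          (Ideal.Quotient.factor_surjective _) (r := Ideal.Quotient.mk q a)
          (mem_nonZeroDivisors_of_ne_zero fun h => haq (Ideal.Quotient.eq_zero_iff_mem.1 h)) (by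
            rw [Ideal.Quotient.factor_mk, Ideal.Quotient.eq_zero_iff_mem]
            exact Ideal.mem_sup_right (Ideal.mem_span_singleton_self a))
        rw [Nat.cast_add, Nat.cast_one, add_comm (rs.length : WithBot ℕ∞), ← add_assoc]
        exact (add_le_add_left h1 _).trans hcq
    let f : (A ⧸ q) →ₗ[A] A ⧸ (Ideal.ofList rs • ⊤ : Submodule A A) :=
      Submodule.liftQ q (LinearMap.toSpanSingleton A _ b) (fun x hx => hbq x hx)
    have hf : Function.Injective f := by
      rw [← LinearMap.ker_eq_bot]
      exact Submodule.ker_liftQ_eq_bot _ _ _ (fun x hx => hann x hx)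
    let Q := (A ⧸ (Ideal.ofList rs • ⊤ : Submodule A A)) ⧸ LinearMap.range f
    have hS := shortExact_mk_ofHom hf (Submodule.mkQ_surjective (LinearMap.range f))
      (LinearMap.exact_map_mkQ_range f)
    have hpd := hasProjectiveDimensionLT_quot rs A 0 hreg inferInstance
    -- As `c < j`, `Ext^j(A/rs, A) = 0`, so `Ext^j(A/q, A)` embeds into `Ext^(j+1)(Q, A)`.
    have hQ := (ih (j + 1) (by omega) Q).le (Nat.le_succ j)
    refine hQ.mono fun a ha => ?_
    rw [Module.mem_annihilator] at ha ⊢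
    intro e
    have h1 : hS.extClass.comp (a • e) (Nat.add_comm 1 j) = 0 :=
      (Abelian.Ext.comp_smul ..).trans (ha _)
    obtain ⟨e', he'⟩ := Abelian.Ext.contravariant_sequence_exact₁ hS _ (a • e) (Nat.add_comm 1 j) h1
    have h0 : e' = 0 := Abelian.Ext.eq_zero_of_hasProjectiveDimensionLT
      (X := ModuleCat.of A (A ⧸ (Ideal.ofList rs • ⊤ : Submodule A A))) e' (0 + rs.length + 1) (by omega)
    rw [← he', h0]
    exact Abelian.Ext.comp_zero ..

/-! ### The biduality map -/

/-- The hypothesis `r ≤ n` makes the natural subtraction in `CdSpanGT` harmless; for `r = n` both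
sides say that `m = 0`. -/
theorem cdSpanGT_iff {r : ℕ} (hr : r ≤ n) {M : Type} [AddCommGroup M] [Module A M] (m : M) :
    CdSpanGT k n r m ↔ CodimGE n (r + 1) (Submodule.span A {m}).annihilator := by
  rw [codimGE_iff, dim_add_le_iff, CdSpanGT]
  generalize ringKrullDim (A ⧸ (Submodule.span A {m}).annihilator) = x
  induction x with
  | bot => exact iff_of_true (WithBot.bot_lt_coe _) (Or.inl rfl)
  | coe x =>
    induction x with
    | top =>
      refine iff_of_false (fun h => ?_) ?_
      · have h2 : (⊤ : ℕ∞) < ((n - r : ℕ) : ℕ∞) := WithBot.coe_lt_coe.1 h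
        exact not_top_lt h2
      · rintro (h | ⟨d, h, _⟩)
        · exact WithBot.coe_ne_bot h
        · exact ENat.natCast_ne_top d (WithBot.coe_inj.1 h).symm
    | coe d =>
      have h1 : (((d : ℕ∞) : WithBot ℕ∞) < ((n - r : ℕ) : WithBot ℕ∞)) ↔ d < n - r := by
        exact WithBot.coe_lt_coe.trans Nat.cast_lt
      refine h1.trans ⟨fun h => Or.inr ⟨d, rfl, by omega⟩, ?_⟩
      rintro (h | ⟨d', h, h'⟩)
      · exact absurd h WithBot.coe_ne_bot
      · have : d = d' := by exact_mod_cast h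
        omega

theorem codimGE_annihilator_of_forall {c : ℕ} {M : Type} [AddCommGroup M] [Module A M]
    [Module.Finite A M] (h : ∀ t : M, CodimGE n c (Submodule.span A {t}).annihilator) :
    CodimGE n c (Module.annihilator A M) := by
  intro p hp hle
  obtain ⟨t, ht⟩ := Module.mem_support_iff_exists_annihilator.1
    ((Module.mem_support_iff_of_finite (p := ⟨p, hp⟩)).2 hle)
  exact h t p hp ht

/-- Suppose `cd(A·t) ≥ r`. The restriction `Ext^r(M, A) → Ext^r(A·t, A)` vanishes if and only if
`cd(A·t) > r`. If it vanishes, then `Ext^r(A·t, A)` embeds into `Ext^(r+1)(M/A·t, A)` and so has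
codimension at least `r + 1`; but `Ext^r(A·t, A) ≃ Hom(A·t, A/rs)`, whose nonzero elements have
annihilators of codimension `r`, and this module is nonzero unless `cd(A·t) > r`. -/
theorem ext_subtype_span_eq_zero_iff {r : ℕ} {M : Type} [AddCommGroup M] [Module A M]
    [Module.Finite A M] {t : M} (ht : CodimGE n r (Submodule.span A {t}).annihilator) :
    (∀ e : Abelian.Ext (ModuleCat.of A M) (ModuleCat.of A A) r,
      (Abelian.Ext.mk₀ (ModuleCat.ofHom (Submodule.span A {t}).subtype)).comp e (zero_add r) = 0) ↔
    CodimGE n (r + 1) (Submodule.span A {t}).annihilator := by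
  set N := Submodule.span A {t}
  constructor
  · intro h
    by_contra hc
    obtain ⟨rs, rfl, hrs, hreg⟩ := exists_isWeaklyRegular_of_codimGE ht
    obtain ⟨Θ⟩ := (ext_of_isWeaklyRegular (N := N) rs A hreg hrs).2
    obtain ⟨b, hb, hbN⟩ := exists_ne_zero_of_not_codimGE hreg hrs hc
    have hS := shortExact_mk_ofHom N.injective_subtype N.mkQ_surjective
      (LinearMap.exact_subtype_mkQ N)
    have hle : Module.annihilator A (Abelian.Ext (ModuleCat.of A (M ⧸ N)) (ModuleCat.of A A)
        (rs.length + 1)) ≤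
        Module.annihilator A (Abelian.Ext (ModuleCat.of A N) (ModuleCat.of A A) rs.length) := by
      intro a ha
      rw [Module.mem_annihilator] at ha ⊢
      intro e
      obtain ⟨e', he'⟩ := Abelian.Ext.contravariant_sequence_exact₁ hS _ (a • e)
        (Nat.add_comm 1 rs.length) ((Abelian.Ext.comp_smul ..).trans (ha _))
      rw [← he']
      exact h e'
    refine not_codimGE_of_ne_zero hreg hb (I := Module.annihilator A (Abelian.Ext (ModuleCat.of A N)
      (ModuleCat.of A A) rs.length)) ?_ ((codimGE_annihilator_ext _ _).mono hle)
    intro a ha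
    let t' : N := ⟨t, Submodule.mem_span_singleton_self t⟩
    let g : A →ₗ[A] N := LinearMap.toSpanSingleton A N t'
    have hg : Function.Surjective g := by
      rintro ⟨y, hy⟩
      obtain ⟨a, rfl⟩ := Submodule.mem_span_singleton.1 hy
      exact ⟨a, rfl⟩
    -- `h'` sends the generator `t` of `N` to `b`, so whatever kills `Ext^r(N, A)`, hence `h'`, kills `b`.
    have hker : LinearMap.ker g ≤ LinearMap.ker (LinearMap.toSpanSingleton A _ b) := fun x hx => by
      have hx' : x • t = 0 := congrArg Subtype.val (LinearMap.mem_ker.1 hx)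
      exact hbN x (Submodule.mem_annihilator_span_singleton _ _ |>.2 hx')
    let h' : N →ₗ[A] A ⧸ (Ideal.ofList rs • ⊤ : Submodule A A) :=
      (Submodule.liftQ (LinearMap.ker g) (LinearMap.toSpanSingleton A _ b) hker) ∘ₗ
        (g.quotKerEquivOfSurjective hg).symm.toLinearMap
    have hh : h' t' = b := by
      have h1 : (g.quotKerEquivOfSurjective hg).symm t' = Submodule.Quotient.mk 1 := by
        rw [LinearEquiv.symm_apply_eq]
        exact (one_smul A t').symm
      change Submodule.liftQ (LinearMap.ker g) (LinearMap.toSpanSingleton A _ b) hker ((g.quotKerEquivOfSurjective hg).symm t') = b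
      rw [h1]
      exact one_smul A b
    have h2 : a • h' = 0 := by
      rw [← Θ.apply_symm_apply h', ← map_smul, Module.mem_annihilator.1 ha, map_zero]
    rw [← hh]
    exact LinearMap.congr_fun h2 t'
  · intro hc e
    obtain ⟨rs, hl, hrs, hreg⟩ := exists_isWeaklyRegular_of_codimGE hc
    exact (ext_of_isWeaklyRegular (N := N) rs A hreg hrs).1 r (by omega) _

end

/-- For `A = k[x_1, …, x_n]` with `k` a field and `n ≥ 1`, `M` a finitely generated `A`-module
and `0 ≤ r ≤ n`: given submodules `T` and `T'` of `M` whose underlying sets are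
`t_{r-1}(M) = {m : cd(A·m) > r - 1}` (with the convention `t_{-1}(M) = M` when `r = 0`) and
`t_r(M) = {m : cd(A·m) > r}` respectively, there is an `A`-linear map
`t_{r-1}(M) → Ext^r_A(Ext^r_A(M, A), A)` whose kernel is exactly `t_r(M)`. -/
theorem exists_linearMap_tr_sub_ker_eq (k : Type) [Field k] (n : ℕ) (hn : 1 ≤ n)
    (M : Type) [AddCommGroup M] [Module (MvPolynomial (Fin n) k) M]
    [Module.Finite (MvPolynomial (Fin n) k) M]
    (r : ℕ) (hr : r ≤ n)
    (T : Submodule (MvPolynomial (Fin n) k) M)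
    (hT : ∀ m : M, m ∈ T ↔ (r = 0 ∨ CdSpanGT k n (r - 1) m))
    (T' : Submodule (MvPolynomial (Fin n) k) M)
    (hT' : ∀ m : M, m ∈ T' ↔ CdSpanGT k n r m) :
    ∃ f : T →ₗ[MvPolynomial (Fin n) k]
        extModule (MvPolynomial (Fin n) k) (extModule (MvPolynomial (Fin n) k) M r) r,
      ∀ x : T, f x = 0 ↔ (x : M) ∈ T' := by
  -- The convention `t_{-1}(M) = M` is matched by codimension `≥ 0` being no condition.
  have hTc : ∀ t ∈ T, CodimGE n r (Submodule.span (MvPolynomial (Fin n) k) {t}).annihilator := by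
    intro t ht
    rcases Nat.eq_zero_or_pos r with rfl | h0
    · exact codimGE_zero _
    · have h1 := (cdSpanGT_iff (by omega) t).1 (((hT t).1 ht).resolve_left (by omega))
      rwa [Nat.sub_add_cancel h0] at h1
  simp only [hT', cdSpanGT_iff hr]
  clear hT hT' T'
  obtain ⟨e₀⟩ := exists_extEquiv (MvPolynomial (Fin n) k) M r
  have hfin : Module.Finite (MvPolynomial (Fin n) k) (extModule (MvPolynomial (Fin n) k) M r) :=
    Module.Finite.equiv e₀.symm
  have hTann : CodimGE n r (Module.annihilator (MvPolynomial (Fin n) k) T) := by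
    refine codimGE_annihilator_of_forall fun t => (hTc t t.2).mono fun a ha => ?_
    rw [Submodule.mem_annihilator_span_singleton] at ha ⊢
    exact Subtype.ext ha
  have hEann : CodimGE n r (Module.annihilator (MvPolynomial (Fin n) k)
      (extModule (MvPolynomial (Fin n) k) M r)) := by
    rw [e₀.annihilator_eq]
    exact codimGE_annihilator_ext r M
  obtain ⟨rs, rfl, hrs, hreg⟩ := exists_isWeaklyRegular_of_codimGE (hTann.inf hEann)
  obtain ⟨e₁⟩ := exists_extEquiv (MvPolynomial (Fin n) k)
    (extModule (MvPolynomial (Fin n) k) M rs.length) rs.length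
  obtain ⟨e₂⟩ := (ext_of_isWeaklyRegular
    (N := extModule (MvPolynomial (Fin n) k) M rs.length) rs _ hreg fun x hx => (hrs x hx).2).2
  set I : Submodule (MvPolynomial (Fin n) k) (MvPolynomial (Fin n) k) :=
    Ideal.ofList rs • ⊤ with hI
  have hI' : I = Ideal.ofList rs := by simp [hI]
  have hDann : ∀ x ∈ rs, x ∈ Module.annihilator (MvPolynomial (Fin n) k)
      (MvPolynomial (Fin n) k ⧸ I) := by
    intro x hx
    rw [Ideal.annihilator_quotient, hI']
    exact Ideal.subset_span hx
  obtain ⟨e₃⟩ := (ext_of_isWeaklyRegular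
    (N := MvPolynomial (Fin n) k ⧸ I) rs _ hreg hDann).2
  have hkill : ∀ (t : T), ∀ x ∈ I, x • (t : M) = 0 := by
    intro t x hx
    have h1 : I ≤ Module.annihilator (MvPolynomial (Fin n) k) T := by
      rw [hI']
      exact Ideal.span_le.2 fun x hx => (hrs x hx).1
    exact congrArg Subtype.val (Module.mem_annihilator.1 (h1 hx) t)
  -- `μ t` is the map `A/rs → M` sending `1` to `t`.
  let μ : T →ₗ[MvPolynomial (Fin n) k] (MvPolynomial (Fin n) k ⧸ I) →ₗ[MvPolynomial (Fin n) k] M :=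
    { toFun := fun t => Submodule.liftQ I (LinearMap.toSpanSingleton _ M (t : M)) (hkill t)
      map_add' := fun s t => by
        refine LinearMap.ext fun y => ?_
        obtain ⟨y, rfl⟩ := Submodule.Quotient.mk_surjective I y
        exact smul_add y (s : M) t
      map_smul' := fun a t => by
        refine LinearMap.ext fun y => ?_
        obtain ⟨y, rfl⟩ := Submodule.Quotient.mk_surjective I y
        exact smul_comm y a (t : M) }
  -- Evaluation at `1`; it identifies `End(A/rs)`, hence `Ext^r(A/rs, A)`, with a submodule of `A/rs`.
  let ev : ((MvPolynomial (Fin n) k ⧸ I) →ₗ[MvPolynomial (Fin n) k] MvPolynomial (Fin n) k ⧸ I)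
      →ₗ[MvPolynomial (Fin n) k] MvPolynomial (Fin n) k ⧸ I :=
    LinearMap.applyₗ (Submodule.Quotient.mk 1)
  have hev : ∀ g, ev g = 0 → g = 0 := by
    intro g hg
    apply Submodule.linearMap_qext
    ext
    exact hg
  -- `F t` is the map `Ext^r(M, A) → Ext^r(A/rs, A)` induced by `μ t`.
  let F : T →ₗ[MvPolynomial (Fin n) k] Abelian.Ext (ModuleCat.of (MvPolynomial (Fin n) k) M)
      (ModuleCat.of _ (MvPolynomial (Fin n) k)) rs.length →ₗ[MvPolynomial (Fin n) k]
      Abelian.Ext (ModuleCat.of (MvPolynomial (Fin n) k) (MvPolynomial (Fin n) k ⧸ I))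
        (ModuleCat.of _ (MvPolynomial (Fin n) k)) rs.length :=
    Abelian.Ext.bilinearCompOfLinear (MvPolynomial (Fin n) k) _ _ _ 0 rs.length rs.length
        (zero_add _) ∘ₗ
      (Abelian.Ext.linearEquiv₀ (R := MvPolynomial (Fin n) k)).symm.toLinearMap ∘ₗ
      ModuleCat.homLinearEquiv.symm.toLinearMap ∘ₗ μ
  have hF : ∀ t e, F t e = (Abelian.Ext.mk₀ (ModuleCat.ofHom (μ t))).comp e (zero_add _) :=
    fun t e => rfl
  let G : T →ₗ[MvPolynomial (Fin n) k] (extModule (MvPolynomial (Fin n) k) M rs.length)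
      →ₗ[MvPolynomial (Fin n) k] MvPolynomial (Fin n) k ⧸ I :=
    (LinearMap.lcomp _ _ e₀.toLinearMap) ∘ₗ
      (LinearMap.compRight _ (ev ∘ₗ e₃.toLinearMap)) ∘ₗ F
  have hG : ∀ t e, G t e = ev (e₃ (F t (e₀ e))) := fun t e => rfl
  refine ⟨e₁.symm.toLinearMap ∘ₗ e₂.symm.toLinearMap ∘ₗ G, fun t => ?_⟩
  have h1 : (e₁.symm.toLinearMap ∘ₗ e₂.symm.toLinearMap ∘ₗ G) t = 0 ↔ ∀ e, F t e = 0 := by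
    have h2 : (e₁.symm.toLinearMap ∘ₗ e₂.symm.toLinearMap ∘ₗ G) t = e₁.symm (e₂.symm (G t)) := rfl
    rw [h2, LinearEquiv.map_eq_zero_iff, LinearEquiv.map_eq_zero_iff]
    constructor
    · intro h e
      have h3 := hG t (e₀.symm e)
      rw [h, e₀.apply_symm_apply, LinearMap.zero_apply] at h3
      exact e₃.map_eq_zero_iff.1 (hev _ h3.symm)
    · intro h
      ext e
      rw [hG, h, map_zero, map_zero, LinearMap.zero_apply]
  rw [h1, ← ext_subtype_span_eq_zero_iff (hTc t t.2)]
  refine forall_congr' fun e => ?_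
  -- `μ t` factors as `A/rs → A·t → M`, and the first factor is injective on `Ext^r(-, A)`.
  let N := Submodule.span (MvPolynomial (Fin n) k) {(t : M)}
  let q : (MvPolynomial (Fin n) k ⧸ I) →ₗ[MvPolynomial (Fin n) k] N :=
    Submodule.liftQ I (LinearMap.toSpanSingleton _ N ⟨t, Submodule.mem_span_singleton_self _⟩)
      fun x hx => Subtype.ext (hkill t x hx)
  have hq : Function.Surjective q := by
    rintro ⟨y, hy⟩
    obtain ⟨a, rfl⟩ := Submodule.mem_span_singleton.1 hy
    exact ⟨Submodule.Quotient.mk a, rfl⟩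
  have hμ : μ t = N.subtype ∘ₗ q := by
    apply Submodule.linearMap_qext
    ext
    rfl
  rw [hF, hμ, ModuleCat.ofHom_comp, ← Abelian.Ext.mk₀_comp_mk₀_assoc]
  refine ⟨fun h => precomp_injective hreg hDann q hq _ h, fun h => ?_⟩
  rw [h]
  exact Abelian.Ext.comp_zero ..
end

section
/- Let M be a nonzero finitely generated A-module with cd(M) = r. Then M is r-pure if and only if there exists an injective A-linear map M → Ext^r_A(Ext^r_A(M, A), A). -/
open CategoryTheory

/-- An `A = k[x_1, …, x_n]`-module `M` is `r`-pure if every nonzero element `m ∈ M` generates a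
cyclic submodule `A·m` of codimension exactly `r`, i.e. `dim (A / ann_A(A·m)) = n - r`. -/
def IsPureMod (k : Type) [Field k] (n : ℕ) (r : ℕ) (M : Type) [AddCommGroup M]
    [Module (MvPolynomial (Fin n) k) M] : Prop :=
  ∀ m : M, m ≠ 0 →
    ringKrullDim (MvPolynomial (Fin n) k ⧸
        (Submodule.span (MvPolynomial (Fin n) k) {m}).annihilator)
      = ((n - r : ℕ) : WithBot (WithTop ℕ))

/-!
Write `A = k[x_1, …, x_n]` and `I = ann M`. The argument replaces the general duality theory over
`A` by linear algebra over a Noether normalisation that is adapted to `I`.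

*Parameters.* Iterating Nagata's change of variables inside `I` produces a ring homomorphism
`g : P = k[y_1, …, y_d] → A` and a regular sequence `xs` in `I`, of length `n - d`, such that, with
`J = (xs)`, the ring `A ⧸ J` is finite and torsion-free over `P`, and `I ∩ P = 0`
(`HasParam`, `hasParam_of_ne_top`). Each step adjoins to `xs` a polynomial which is monic in a new
variable. Since `P → A ⧸ I` is injective and finite, `d = dim A ⧸ I = n - r`, so `xs` has length
`r`.

*Ext.* If `xs` kills `N`, Rees' dimension shifting gives
`Ext^r(N, A) ≃ Hom_A(N, A ⧸ J)` (`rees`). Applied to `M` and to `Ext^r(M, A)`, it identifies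
`Ext^r(Ext^r(M, A), A)` with the bidual of `M` with respect to `A ⧸ J`.

*Purity.* For an ideal `K ⊇ J`, `dim A ⧸ K = d` if and only if `K ∩ P = 0`
(`ringKrullDim_quotient_eq_iff`). Taking for `K` the annihilators of elements, `M` is `r`-pure if
and only if it is torsion-free over `P`.

*Conclusion.* The module `Hom_A(-, A ⧸ J)` is torsion-free over `P`, hence so is every submodule of
it. Conversely, let `M` be torsion-free over `P`. As `M` is finite over the domain `P`, its
`P`-linear functionals separate points (`exists_functional`). A monic polynomial extension is a
Frobenius extension, so a `P`-linear functional that does not vanish at `m` yields an `A`-linear map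
`M → A ⧸ J` that does not vanish at `m` (`exists_lift`, and the last clause of `HasParam`).
Therefore the evaluation map from `M` to its bidual is injective.
-/

/-! ### Rees' theorem -/

section ExtPart
variable {A : Type} [CommRing A]

/-- The map of cochain complexes `Hom(P, Y) ⟶ Hom(P, Y')` given by composition with `f`. -/
noncomputable def homMap (P : ChainComplex (ModuleCat.{0} A) ℕ)
    {Y Y' : ModuleCat.{0} A} (f : Y ⟶ Y') :
    P.linearYonedaObj A Y ⟶ P.linearYonedaObj A Y' where
  f i := ModuleCat.ofHom (Linear.rightComp A (P.X i) f)
  comm' i j _ := by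
    ext (φ : P.X i ⟶ Y)
    change (P.d j i ≫ φ) ≫ f = P.d j i ≫ (φ ≫ f)
    simp

/-- The sequence of cochain complexes `Hom(P, S₁) ⟶ Hom(P, S₂) ⟶ Hom(P, S₃)`. -/
noncomputable def homSES (P : ChainComplex (ModuleCat.{0} A) ℕ)
    (S : ShortComplex (ModuleCat.{0} A)) :
    ShortComplex (CochainComplex (ModuleCat.{0} A) ℕ) :=
  ShortComplex.mk (homMap P S.f) (homMap P S.g) (by
    ext i (φ : P.X i ⟶ S.X₁)
    change (φ ≫ S.f) ≫ S.g = 0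
    simp)

lemma homSES_shortExact (P : ChainComplex (ModuleCat.{0} A) ℕ) [∀ i, Projective (P.X i)]
    (S : ShortComplex (ModuleCat.{0} A)) (hS : S.ShortExact) : (homSES P S).ShortExact := by
  have := hS.mono_f
  have := hS.epi_g
  apply HomologicalComplex.shortExact_of_degreewise_shortExact
  intro i
  refine ShortComplex.ShortExact.mk' ?_ ?_ ?_
  · rw [ShortComplex.moduleCat_exact_iff]
    intro (φ : P.X i ⟶ S.X₂) (hφ : φ ≫ S.g = 0)
    exact ⟨hS.exact.lift φ hφ, hS.exact.lift_f φ hφ⟩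
  · rw [ModuleCat.mono_iff_injective]
    intro (φ : P.X i ⟶ S.X₁) (ψ : P.X i ⟶ S.X₁) (h : φ ≫ S.f = ψ ≫ S.f)
    exact (cancel_mono S.f).1 h
  · rw [ModuleCat.epi_iff_surjective]
    intro (φ : P.X i ⟶ S.X₃)
    exact ⟨Projective.factorThru φ S.g, Projective.factorThru_comp φ S.g⟩

/-- If `x` kills `N`, then multiplication by `x` on `Y` induces zero on `Ext^i(N, Y)`: on
`Hom(P, Y)` it agrees with multiplication by `x` on the resolution `P`, which lifts the zero
endomorphism of `N` and is therefore null-homotopic. -/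
lemma homologyMap_smul_eq_zero {N : ModuleCat.{0} A} (P : ProjectiveResolution N)
    (Y : ModuleCat.{0} A) (x : A) (hx : ∀ m : N, x • m = 0) (i : ℕ) :
    HomologicalComplex.homologyMap (homMap P.complex (x • 𝟙 Y)) i = 0 := by
  have h0 : (x • 𝟙 P.complex) ≫ P.π = 0 := by
    ext m
    change P.π.f 0 (x • m) = 0
    rw [map_smul]
    exact hx _
  let h : Homotopy (x • 𝟙 P.complex) 0 := ProjectiveResolution.liftHomotopyZero _ h0
  let G := ((linearYoneda A (ModuleCat.{0} A)).obj Y).rightOp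
  have : G.Additive := inferInstance
  have h' := ((G.mapHomotopy h).unop).homologyMap_eq i
  have e1 : homMap P.complex (x • 𝟙 Y) = (HomologicalComplex.unopFunctor _ _).map
      ((G.mapHomologicalComplex _).map (x • 𝟙 P.complex)).op := by
    ext j (φ : P.complex.X j ⟶ Y)
    change φ ≫ (x • 𝟙 Y) = (x • 𝟙 _) ≫ φ
    simp
  rw [e1]
  refine h'.trans ?_
  rw [Functor.map_zero]
  exact HomologicalComplex.homologyMap_zero _ _ _

/-- `Ext^0(N, Y) ≅ Hom(N, Y)`, computed with a given projective resolution of `N`. -/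
noncomputable def homologyZeroIso {N : ModuleCat.{0} A} (P : ProjectiveResolution N)
    (Y : ModuleCat.{0} A) :
    (P.complex.linearYonedaObj A Y).homology 0 ≅ ModuleCat.of A (N ⟶ Y) := by
  let K := P.complex.linearYonedaObj A Y
  let p : P.complex.X 0 ⟶ N := P.π.f 0
  have hp : P.complex.d 1 0 ≫ p = 0 := P.complex_d_comp_π_f_zero
  have hpe : Epi p := inferInstanceAs (Epi (P.π.f 0))
  have hex : (ShortComplex.mk (P.complex.d 1 0) p hp).Exact := P.exact₀
  let S : ShortComplex (ModuleCat.{0} A) := ShortComplex.mk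
    (X₁ := ModuleCat.of A (N ⟶ Y)) (X₂ := K.X 0) (X₃ := K.X 1)
    (ModuleCat.ofHom (Linear.leftComp A Y p)) (K.d 0 1) (by
      ext (φ : N ⟶ Y)
      change P.complex.d 1 0 ≫ p ≫ φ = 0
      rw [reassoc_of% hp, Limits.zero_comp])
  have hS : S.Exact := by
    rw [ShortComplex.moduleCat_exact_iff]
    intro (φ : P.complex.X 0 ⟶ Y) (hφ : P.complex.d 1 0 ≫ φ = 0)
    exact ⟨hex.desc φ hφ, hex.g_desc φ hφ⟩
  have : Mono S.f := by
    rw [ModuleCat.mono_iff_injective]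
    intro (φ : N ⟶ Y) (ψ : N ⟶ Y) (h : p ≫ φ = p ≫ ψ)
    exact (cancel_epi p).1 h
  exact (CochainComplex.isoHomologyπ₀ K).symm ≪≫
    (K.cyclesIsKernel 0 1 (by simp)).conePointUniqueUpToIso hS.fIsKernel

open RingTheory.Sequence Limits

/-- Rees' theorem for a fixed projective resolution: if `xs` is weakly regular on `Q` and kills `N`,
then `Ext^j(N, Q) = 0` for `j < |xs|` and `Ext^|xs|(N, Q) ≃ Hom(N, Q ⧸ (xs) Q)`. Induction on `xs`
through the long exact sequence of `0 → Q → Q → Q ⧸ x Q → 0`, in which multiplication by `x`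
vanishes on `Ext`. -/
lemma rees_aux {N : ModuleCat.{0} A} (P : ProjectiveResolution N) (xs : List A) :
    ∀ (Q : Type) [AddCommGroup Q] [Module A Q], IsWeaklyRegular Q xs →
    (∀ x ∈ xs, ∀ m : N, x • m = 0) →
    (∀ j < xs.length, IsZero ((P.complex.linearYonedaObj A (ModuleCat.of A Q)).homology j)) ∧
    Nonempty (((P.complex.linearYonedaObj A (ModuleCat.of A Q)).homology xs.length) ≃ₗ[A]
      (N →ₗ[A] (Q ⧸ (Ideal.ofList xs • ⊤ : Submodule A Q)))) := by
  induction xs with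
  | nil =>
    intro Q _ _ _ _
    refine ⟨by simp, ⟨?_⟩⟩
    let e₁ : (P.complex.linearYonedaObj A (ModuleCat.of A Q)).homology 0 ≃ₗ[A]
        (N ⟶ ModuleCat.of A Q) := (homologyZeroIso P (ModuleCat.of A Q)).toLinearEquiv
    let e₂ : (N ⟶ ModuleCat.of A Q) ≃ₗ[A] (N →ₗ[A] Q) := ModuleCat.homLinearEquiv
    exact e₁.trans (e₂.trans
      (LinearEquiv.congrRight (Submodule.quotEquivOfEqBot _ (by simp)).symm))
  | cons x xs ih =>
    intro Q _ _ hreg hN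
    rw [isWeaklyRegular_cons_iff] at hreg
    obtain ⟨hx, hreg⟩ := hreg
    obtain ⟨hz, ⟨e⟩⟩ := ih (QuotSMulTop x Q) hreg (fun y hy => hN y (List.mem_cons_of_mem _ hy))
    have hxN := hN x List.mem_cons_self
    have hSES := homSES_shortExact P.complex _ (IsSMulRegular.smulShortComplex_shortExact
      (M := ModuleCat.of A Q) hx)
    have hf : ∀ i, HomologicalComplex.homologyMap (homSES P.complex
        (ModuleCat.smulShortComplex (ModuleCat.of A Q) x)).f i = 0 := fun i =>
      homologyMap_smul_eq_zero P _ x hxN i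
    have hepi : ∀ i, Epi (hSES.δ i (i+1) rfl) := fun i =>
      (hSES.homology_exact₁ i (i+1) rfl).epi_f (hf _)
    have h1 : ∀ j < xs.length + 1,
        IsZero ((P.complex.linearYonedaObj A (ModuleCat.of A Q)).homology j) := by
      intro j hj
      cases j with
      | zero =>
        refine IsZero.of_iso ?_ (homologyZeroIso P (ModuleCat.of A Q))
        have : Subsingleton (N ⟶ ModuleCat.of A Q) := by
          refine ⟨fun φ ψ => ?_⟩
          ext m
          apply hx
          change x • φ m = x • ψ m
          rw [← map_smul, ← map_smul, hxN, map_zero, map_zero]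
        exact ModuleCat.isZero_of_subsingleton _
      | succ j =>
        exact @IsZero.of_epi _ _ _ _ _ (hSES.δ j (j+1) rfl) (hepi j) (hz j (by omega))
    refine ⟨h1, ?_⟩
    -- The connecting map out of `Ext^|xs|(N, Q ⧸ x Q)` is mono because `Ext^|xs|(N, Q) = 0`.
    have hmono : Mono (hSES.δ xs.length (xs.length+1) rfl) :=
      (hSES.homology_exact₃ xs.length (xs.length+1) rfl).mono_g
        ((h1 _ (Nat.lt_succ_self _)).eq_of_src _ _)
    have := hepi xs.length
    have := isIso_of_mono_of_epi (hSES.δ xs.length (xs.length+1) rfl)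
    exact ⟨(asIso (hSES.δ xs.length (xs.length+1) rfl)).symm.toLinearEquiv.trans
      (e.trans (LinearEquiv.congrRight
        (Submodule.quotOfListConsSMulTopEquivQuotSMulTopInner Q x xs).symm))⟩

lemma rees (N : Type) [AddCommGroup N] [Module A N] (xs : List A) (hreg : IsWeaklyRegular A xs)
    (hN : ∀ x ∈ xs, ∀ m : N, x • m = 0) :
    Nonempty (extModule A N xs.length ≃ₗ[A] (N →ₗ[A] (A ⧸ Ideal.ofList xs))) := by
  let P := projectiveResolution (ModuleCat.of A N)
  obtain ⟨-, ⟨e⟩⟩ := rees_aux P xs A hreg hN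
  exact ⟨((P.isoExt (R := A) xs.length (ModuleCat.of A A)).toLinearEquiv).trans
    (e.trans (LinearEquiv.congrRight (Submodule.quotEquivOfEq _ _ (by simp))))⟩

end ExtPart

/-! ### Adapted parameters -/

section ParamPart
open RingTheory.Sequence Polynomial

/-- Adapted parameters for an ideal `I` of `A`, where `n` plays the role of `dim A`: a polynomial
ring `P = k[y_1, …, y_d]` with a map `g : P → A`, and a weakly regular sequence `xs` of length
`n - d` generating an ideal `J ≤ I`, such that `I ∩ P = 0`, and `A ⧸ J` is finite and torsion-free
over `P`. The last clause is a weak form of `A ⧸ J` being a Frobenius extension of `P`: if `J` kills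
`N`, then for every point of `N` at which some `P`-linear functional (an additive map `ψ` with
`ψ (g c • m) = c * ψ m`) is nonzero there is an `A`-linear map to `A ⧸ J` that is nonzero there.
The `P`-module structures are encoded through `g` so that none has to be installed on `N`. -/
def HasParam (k : Type) [Field k] (n : ℕ) (A : Type) [CommRing A] (I : Ideal A) : Prop :=
  ∃ (d : ℕ) (g : MvPolynomial (Fin d) k →+* A) (xs : List A) (J : Ideal A),
    J = Ideal.ofList xs ∧ xs.length + d = n ∧ J ≤ I ∧ I.comap g = ⊥ ∧
    ((Ideal.Quotient.mk J).comp g).Finite ∧ IsWeaklyRegular A xs ∧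
    (∀ c p, c ≠ 0 → g c * p ∈ J → p ∈ J) ∧
    ∀ (N : Type) [AddCommGroup N] [Module A N], (∀ x ∈ J, ∀ m : N, x • m = 0) →
      ∀ ψ : N →+ MvPolynomial (Fin d) k, (∀ c m, ψ (g c • m) = c * ψ m) →
      ∀ m, ψ m ≠ 0 → ∃ φ : N →ₗ[A] A ⧸ J, φ m ≠ 0

lemma hasParam_bot (k : Type) [Field k] (n : ℕ) :
    HasParam k n (MvPolynomial (Fin n) k) ⊥ := by
  refine ⟨n, RingHom.id _, [], ⊥, by simp, by simp, le_rfl, ?_, ?_, by simp, ?_, ?_⟩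
  · exact Ideal.comap_id _
  · exact RingHom.Finite.of_surjective _ Ideal.Quotient.mk_surjective
  · simp +contextual
  · intro N _ _ _ ψ hψ m hm
    refine ⟨(Submodule.mkQ _).comp
      ({ ψ with map_smul' := hψ } : N →ₗ[_] MvPolynomial (Fin n) k), ?_⟩
    intro h
    apply hm
    have : ψ m ∈ (⊥ : Ideal (MvPolynomial (Fin n) k)) := (Submodule.Quotient.mk_eq_zero _).1 h
    simpa using this

lemma HasParam.congr {k : Type} [Field k] {n : ℕ} {A B : Type} [CommRing A] [CommRing B]
    (e : A ≃+* B) {I : Ideal A} (h : HasParam k n B (I.map e)) : HasParam k n A I := by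
  obtain ⟨d, g, xs, J, hJ, hn, hI, hc, hfin, hreg, htf, hlift⟩ := h
  have hJ' : J.comap e = Ideal.ofList (xs.map e.symm) := by
    rw [← Ideal.map_symm, hJ]; exact Ideal.map_ofList (e.symm : B →+* A) xs
  have hmI : ∀ p, p ∈ I ↔ e p ∈ I.map e := by
    intro p
    refine ⟨fun h => Ideal.mem_map_of_mem _ h, fun h => ?_⟩
    rw [← Ideal.comap_symm] at h
    simpa using h
  let q : B ⧸ J ≃+* A ⧸ J.comap e :=
    Ideal.quotientEquiv _ _ e.symm (Ideal.map_symm e).symm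
  refine ⟨d, (e.symm : B →+* A).comp g, xs.map e.symm, J.comap e, hJ', by simpa using hn,
    ?_, ?_, ?_, ?_, ?_, ?_⟩
  · intro p hp
    rw [hmI]; exact hI hp
  · rw [eq_bot_iff, ← hc]
    intro p hp
    have := (hmI _).1 hp
    simpa using this
  · have : (Ideal.Quotient.mk (J.comap e)).comp ((e.symm : B →+* A).comp g) =
        (q : _ →+* _).comp ((Ideal.Quotient.mk J).comp g) := by
      ext <;> rfl
    rw [this]
    exact (RingHom.Finite.of_surjective _ q.surjective).comp hfin
  · exact (AddEquiv.isWeaklyRegular_congr (e := e.symm.toAddEquiv)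
      (List.forall₂_map_right_iff.mpr <| List.forall₂_same.mpr fun r _ x => by simp)).1 hreg
  · intro c p hc' hp
    rw [Ideal.mem_comap] at hp ⊢
    exact htf c _ hc' (by simpa using hp)
  · intro N _ _ hN ψ hψ m hm
    let _ : Module B N := Module.compHom N (e.symm : B →+* A)
    obtain ⟨φ, hφ⟩ := hlift N
      (fun x hx m => hN (e.symm x) (by rw [Ideal.mem_comap]; simpa using hx) m) ψ hψ m hm
    refine ⟨{ toFun := fun m => q (φ m), map_add' := by simp, map_smul' := ?_ }, ?_⟩
    · intro a m
      have h1 : a • m = (e a) • m := by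
        change a • m = (e.symm (e a)) • m
        simp
      rw [h1, map_smul]
      obtain ⟨b, hb⟩ := Ideal.Quotient.mk_surjective (φ m)
      rw [← hb]
      change q (Ideal.Quotient.mk _ (e a * b)) = _
      rw [map_mul, map_mul]
      change Ideal.Quotient.mk _ (e.symm (e a)) * _ = _
      rw [e.symm_apply_apply]
      rfl
    · simpa using hφ

lemma coeff_divX_iterate {R : Type} [CommRing R] (f : R[X]) (i j : ℕ) :
    (divX^[i] f).coeff j = f.coeff (j + i) := by
  induction i generalizing j with
  | zero => rfl
  | succ i ih => rw [Function.iterate_succ_apply', coeff_divX, ih]; congr 1; omega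

/-- The recursion of Horner's scheme. -/
lemma X_mul_divX_iterate {R : Type} [CommRing R] (f : R[X]) (i : ℕ) :
    X * divX^[i+1] f = divX^[i] f - C (f.coeff i) := by
  have := X_mul_divX_add (divX^[i] f)
  rw [coeff_divX_iterate, zero_add] at this
  rw [Function.iterate_succ_apply']
  exact eq_sub_of_add_eq this

lemma mem_map_C_iff_map {R : Type} [CommRing R] (J : Ideal R) (p : R[X]) :
    p ∈ J.map C ↔ p.map (Ideal.Quotient.mk J) = 0 := by
  rw [Ideal.mem_map_C_iff, Polynomial.ext_iff]
  simp [Ideal.Quotient.eq_zero_iff_mem]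

lemma mem_J_iff {R : Type} [CommRing R] (J : Ideal R) {f : R[X]} (hf : f.Monic) (p : R[X]) :
    p ∈ J.map C ⊔ Ideal.span {f} ↔ p %ₘ f ∈ J.map C := by
  constructor
  · intro hp
    obtain ⟨a, ha, b, hb, rfl⟩ := Submodule.mem_sup.1 hp
    obtain ⟨c, rfl⟩ := Ideal.mem_span_singleton.1 hb
    rw [add_modByMonic, (modByMonic_eq_zero_iff_dvd hf).2 (dvd_mul_right _ _), add_zero]
    rw [mem_map_C_iff_map] at ha ⊢
    rw [map_modByMonic _ hf, ha, zero_modByMonic]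
  · intro hp
    rw [← modByMonic_add_div p f]
    exact add_mem (Ideal.mem_sup_left hp)
      (Ideal.mem_sup_right (Ideal.mul_mem_right _ _ (Ideal.mem_span_singleton_self f)))

/-- A monic polynomial `f` of positive degree `D` makes `R[X] ⧸ (J, f)` a Frobenius extension of
`R ⧸ J`. Writing `h_i` for the truncated quotient of `f` by `X ^ (i + 1)` (`divX^[i + 1] f`), an
`R`-linear `φ' : N → R ⧸ J` lifts to the `R[X]`-linear map `m ↦ ∑ i < D, φ' (h_i m) X ^ i`, whose
coefficient at `X ^ (D - 1)` is `φ' m` because `h_(D-1) = 1`. -/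
lemma exists_lift {R : Type} [CommRing R] [Nontrivial R] (J : Ideal R) {f : R[X]} (hf : f.Monic)
    (hd : 0 < f.natDegree) (N : Type) [AddCommGroup N] [Module R[X] N]
    (hN : ∀ m : N, f • m = 0) (φ' : N →+ R ⧸ J)
    (hφ' : ∀ (c : R) m, φ' (C c • m) = Ideal.Quotient.mk J c * φ' m) (m : N) (hm : φ' m ≠ 0) :
    ∃ φ : N →ₗ[R[X]] R[X] ⧸ (J.map C ⊔ Ideal.span {f}), φ m ≠ 0 := by
  set I := J.map C ⊔ Ideal.span {f} with hI
  let ι : R ⧸ J →+* R[X] ⧸ I := Ideal.quotientMap I C (by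
    rw [← Ideal.map_le_iff_le_comap]; exact le_sup_left)
  have hι : ∀ c : R, ι (Ideal.Quotient.mk J c) = Ideal.Quotient.mk I (C c) := fun c => by
    simp [ι]
  let x : R[X] ⧸ I := Ideal.Quotient.mk I X
  let φ₀ : N →+ R[X] ⧸ I := AddMonoidHom.mk' (fun m => ∑ i ∈ Finset.range f.natDegree,
    ι (φ' (divX^[i+1] f • m)) * x ^ i) (by
      intro a b
      simp only [smul_add, map_add, add_mul, Finset.sum_add_distrib])
  have hφ₀ : ∀ m, φ₀ m = ∑ i ∈ Finset.range f.natDegree,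
    ι (φ' (divX^[i+1] f • m)) * x ^ i := fun _ => rfl
  have hlast : divX^[f.natDegree] f = 1 := by
    ext j
    rw [coeff_divX_iterate, coeff_one]
    split_ifs with h
    · subst h; simpa using hf.coeff_natDegree
    · exact coeff_eq_zero_of_natDegree_lt (by omega)
  have hC : ∀ (c : R) m, φ₀ (C c • m) = Ideal.Quotient.mk I (C c) * φ₀ m := by
    intro c m
    simp only [hφ₀, Finset.mul_sum]
    refine Finset.sum_congr rfl fun i _ => ?_
    rw [smul_comm, hφ', map_mul, hι, mul_assoc]
  -- Horner's recursion turns `φ₀ (X m)` into a telescoping sum; the boundary terms cancel because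
  -- `f` kills `N` and vanishes in the quotient ring.
  have hX : ∀ m, φ₀ ((X : R[X]) • m) = x * φ₀ m := by
    intro m
    have h1 : x * φ₀ m = ∑ i ∈ Finset.range f.natDegree,
        ι (φ' (divX^[i+1] f • m)) * x ^ (i+1) := by
      rw [hφ₀, Finset.mul_sum]
      exact Finset.sum_congr rfl fun i _ => by ring
    have h2 : φ₀ ((X : R[X]) • m) = ∑ i ∈ Finset.range f.natDegree,
        ι (φ' (divX^[i] f • m)) * x ^ i - (∑ i ∈ Finset.range f.natDegree,
          Ideal.Quotient.mk I (C (f.coeff i)) * x ^ i) * ι (φ' m) := by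
      rw [hφ₀, Finset.sum_mul, ← Finset.sum_sub_distrib]
      refine Finset.sum_congr rfl fun i _ => ?_
      rw [smul_smul, mul_comm _ X, X_mul_divX_iterate, sub_smul, map_sub, hφ', map_sub, map_mul, hι]
      ring
    have h3 := Finset.sum_range_succ (fun i => ι (φ' (divX^[i] f • m)) * x ^ i) f.natDegree
    rw [Finset.sum_range_succ'] at h3
    rw [hlast, one_smul] at h3
    simp only [Function.iterate_zero, id, hN, map_zero, zero_mul, add_zero] at h3
    have h4 : Ideal.Quotient.mk I f = 0 := by
      rw [Ideal.Quotient.eq_zero_iff_mem]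
      exact Ideal.mem_sup_right (Ideal.mem_span_singleton_self f)
    rw [f.as_sum_range_C_mul_X_pow, Finset.sum_range_succ, hf.coeff_natDegree] at h4
    simp only [map_add, map_sum, map_mul, map_pow, map_one, one_mul] at h4
    rw [h1, h2, h3, eq_neg_of_add_eq_zero_left h4]
    change _ - (-x ^ _) * _ = _
    ring
  have hsmul : ∀ (p : R[X]) m, φ₀ (p • m) = Ideal.Quotient.mk I p * φ₀ m := by
    intro p
    induction p using Polynomial.induction_on with
    | C a => exact hC a
    | add p q hp hq => intro m; rw [add_smul, map_add, hp, hq, map_add, add_mul]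
    | monomial n a h =>
      intro m
      rw [pow_succ, ← mul_assoc, mul_smul, h, hX, map_mul, map_mul (Ideal.Quotient.mk I) _ X,
        mul_assoc]
      simp [x, mul_assoc]
  -- If `φ₀ m = 0`, its polynomial representative of degree `< D` has all coefficients in `J`;
  -- the one at `D - 1` represents `φ' m`.
  refine ⟨{ φ₀ with map_smul' := fun p m => hsmul p m }, ?_⟩
  intro h0
  change φ₀ m = 0 at h0
  apply hm
  choose s hs using fun i => Ideal.Quotient.mk_surjective (φ' (divX^[i+1] f • m))
  let p : R[X] := ∑ i ∈ Finset.range f.natDegree, C (s i) * X ^ i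
  have hp : Ideal.Quotient.mk I p = 0 := by
    rw [← h0, hφ₀]
    simp only [p, map_sum, map_mul, map_pow]
    exact Finset.sum_congr rfl fun i _ => by rw [← hs, hι]
  have hdeg : p.degree < f.degree := by
    refine (degree_sum_fin_lt (n := f.natDegree) (fun i => s i)).trans_eq' ?_ |>.trans_eq ?_
    · rw [Fin.sum_univ_eq_sum_range (fun i => C (s i) * X ^ i)]
    · exact (degree_eq_natDegree hf.ne_zero).symm
  rw [Ideal.Quotient.eq_zero_iff_mem, mem_J_iff J hf, (modByMonic_eq_self_iff hf).2 hdeg,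
    Ideal.mem_map_C_iff] at hp
  have h5 := hp (f.natDegree - 1)
  have h6 : p.coeff (f.natDegree - 1) = s (f.natDegree - 1) := by
    simp only [p, finsetSum_coeff, coeff_C_mul, coeff_X_pow]
    rw [Finset.sum_eq_single (f.natDegree - 1)]
    · simp
    · intro b _ hb; simp [hb.symm]
    · intro h; simp at h; omega
  rw [h6, ← Ideal.Quotient.eq_zero_iff_mem, hs, Nat.sub_add_cancel hd, hlast, one_smul] at h5
  exact h5

/-- The inductive step: parameters for `I ∩ R`, together with a monic element of `I`, give
parameters for an ideal `I` of `R[X]`. The parameter ring `P` stays the same, and the monic polynomial is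
appended to the regular sequence. -/
lemma HasParam.step {k : Type} [Field k] {n : ℕ} {R : Type} [CommRing R] [Nontrivial R]
    {I : Ideal R[X]} (h : HasParam k n R (I.comap C)) {f : R[X]} (hf : f.Monic) (hfI : f ∈ I)
    (hI : I ≠ ⊤) :
    HasParam k (n+1) R[X] I := by
  obtain ⟨d, g, xs, J, hJ, hn, hxI, hc, hfin, hreg, htf, hlift⟩ := h
  have hd : 0 < f.natDegree := by
    rw [Nat.pos_iff_ne_zero]
    intro h0
    rw [hf.natDegree_eq_zero] at h0
    exact hI ((Ideal.eq_top_iff_one _).2 (h0 ▸ hfI))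
  have hJ' : J.map C ⊔ Ideal.span {f} = Ideal.ofList (xs.map C ++ [f]) := by
    rw [Ideal.ofList_append, Ideal.ofList_singleton, hJ, Ideal.map_ofList]
  refine ⟨d, C.comp g, xs.map C ++ [f], J.map C ⊔ Ideal.span {f}, hJ', by simp; omega,
    ?_, ?_, ?_, ?_, ?_, ?_⟩
  · rw [sup_le_iff, Ideal.map_le_iff_le_comap, Ideal.span_singleton_le_iff_mem]
    exact ⟨hxI, hfI⟩
  · rw [← Ideal.comap_comap, hc]
  · let q : R ⧸ J →+* R[X] ⧸ (J.map C ⊔ Ideal.span {f}) := Ideal.quotientMap _ C (by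
      rw [← Ideal.map_le_iff_le_comap]; exact le_sup_left)
    have e1 : (Ideal.Quotient.mk (J.map C ⊔ Ideal.span {f})).comp (C.comp g) =
        q.comp ((Ideal.Quotient.mk J).comp g) := by
      ext <;> simp [q]
    rw [e1]
    refine RingHom.Finite.comp ?_ hfin
    apply RingHom.Finite.of_comp_finite (f := Ideal.Quotient.mk J)
    have e2 : q.comp (Ideal.Quotient.mk J) = (Ideal.Quotient.factor (le_sup_right :
        Ideal.span {f} ≤ J.map C ⊔ Ideal.span {f})).comp
        (algebraMap R (R[X] ⧸ Ideal.span {f})) := by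
      ext; simp [q]; rfl
    rw [e2]
    refine RingHom.Finite.comp (RingHom.Finite.of_surjective _ ?_) ?_
    · exact Ideal.Quotient.factor_surjective _
    · rw [RingHom.finite_algebraMap]
      exact hf.finite_quotient
  · rw [isWeaklyRegular_append_iff, isWeaklyRegular_singleton_iff]
    refine ⟨hreg.of_flat, ?_⟩
    have e3 : (Ideal.ofList (xs.map C) • ⊤ : Submodule R[X] R[X]) = J.map C := by
      rw [← Ideal.map_ofList]; simp [hJ]
    rw [e3, isSMulRegular_iff_right_eq_zero_of_smul]
    intro y hy
    obtain ⟨p, rfl⟩ := Submodule.Quotient.mk_surjective _ y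
    rw [← Submodule.Quotient.mk_smul, Submodule.Quotient.mk_eq_zero, mem_map_C_iff_map,
      smul_eq_mul, Polynomial.map_mul] at hy
    rw [Submodule.Quotient.mk_eq_zero, mem_map_C_iff_map]
    exact (hf.map _).mul_right_eq_zero_iff.1 hy
  · intro c p hc0 hp
    rw [mem_J_iff J hf, Ideal.mem_map_C_iff] at hp ⊢
    intro i
    apply htf c _ hc0
    have := hp i
    have e4 : (C.comp g) c * p = (g c) • p := by
      rw [smul_eq_C_mul]; rfl
    rwa [e4, smul_modByMonic, coeff_smul, smul_eq_mul] at this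
  · intro N _ _ hN ψ hψ m hm
    let _ : Module R N := Module.compHom N (C : R →+* R[X])
    obtain ⟨φ', hφ'⟩ := hlift N (fun x hx m => hN (C x)
      (Ideal.mem_sup_left (Ideal.mem_map_of_mem _ hx)) m) ψ hψ m hm
    exact exists_lift J hf hd N
      (fun m => hN f (Ideal.mem_sup_right (Ideal.mem_span_singleton_self f)) m)
      φ'.toAddMonoidHom (fun c m => φ'.map_smul c m) m hφ'

end ParamPart

/-! ### Nagata's change of variables -/

section NagataPart
open Polynomial MvPolynomial

variable {k : Type} [Field k] {n : ℕ}

/-- Nagata's substitution: `X_0 ↦ X_0` and `X_i ↦ X_i + c X_0 ^ (u ^ i)` for `i ≠ 0`. -/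
noncomputable def nagataHom (n u : ℕ) (c : k) :
    MvPolynomial (Fin (n + 1)) k →ₐ[k] MvPolynomial (Fin (n + 1)) k :=
  MvPolynomial.aeval fun i ↦
    if i = 0 then MvPolynomial.X 0 else MvPolynomial.X i + c • MvPolynomial.X 0 ^ u ^ i.1

lemma nagataHom_comp_neg (u : ℕ) (c : k) :
    (nagataHom n u c).comp (nagataHom n u (-c)) = AlgHom.id _ _ := by
  rw [nagataHom, nagataHom, comp_aeval, ← MvPolynomial.aeval_X_left]
  ext i v
  cases i using Fin.cases <;> simp

/-- Nagata's substitution with `c = 1` as an automorphism; its inverse has `c = -1`. -/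
noncomputable def nagataEquiv (k : Type) [Field k] (n u : ℕ) :
    MvPolynomial (Fin (n + 1)) k ≃ₐ[k] MvPolynomial (Fin (n + 1)) k :=
  AlgEquiv.ofAlgHom (nagataHom n u 1) (nagataHom n u (-1))
    (nagataHom_comp_neg u 1) (by simpa using nagataHom_comp_neg (n := n) u (-1 : k))

/-- Nagata's substitution, read as a map to polynomials in `X_0` over the other variables. -/
noncomputable def nagataPoly (k : Type) [Field k] (n u : ℕ) :
    MvPolynomial (Fin (n + 1)) k ≃ₐ[k] (MvPolynomial (Fin n) k)[X] :=
  (nagataEquiv k n u).trans (finSuccEquiv k n)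

lemma nagataPoly_X_zero (u : ℕ) : nagataPoly k n u (MvPolynomial.X 0) = Polynomial.X := by
  simp [nagataPoly, nagataEquiv, nagataHom, finSuccEquiv_X_zero]

lemma nagataPoly_X_succ (u : ℕ) (i : Fin n) :
    nagataPoly k n u (MvPolynomial.X i.succ) =
      Polynomial.X ^ u ^ (i.1 + 1) + Polynomial.C (MvPolynomial.X i) := by
  simp [nagataPoly, nagataEquiv, nagataHom, finSuccEquiv_X_zero, finSuccEquiv_X_succ, add_comm]

lemma nagataPoly_X_monic (u : ℕ) (hu : 0 < u) (i : Fin (n + 1)) :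
    (nagataPoly k n u (MvPolynomial.X i)).Monic ∧
      (nagataPoly k n u (MvPolynomial.X i)).natDegree = u ^ i.1 := by
  cases i using Fin.cases with
  | zero => rw [nagataPoly_X_zero]; simp [monic_X]
  | succ i =>
    rw [nagataPoly_X_succ]
    exact ⟨monic_X_pow_add_C _ (pow_pos hu _).ne', natDegree_X_pow_add_C⟩

lemma nagataPoly_monomial (u : ℕ) (hu : 0 < u) (v : Fin (n + 1) →₀ ℕ) :
    (nagataPoly k n u (MvPolynomial.monomial v 1)).Monic ∧
      (nagataPoly k n u (MvPolynomial.monomial v 1)).natDegree = ∑ i, u ^ i.1 * v i := by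
  rw [monomial_eq, Finsupp.prod_fintype _ _ (fun i ↦ pow_zero _)]
  simp only [map_one, one_mul, map_prod, map_pow]
  have h := fun i => nagataPoly_X_monic (k := k) u hu (n := n) i
  have hm := fun (i : Fin (n + 1)) => (h i).1.pow (v i)
  refine ⟨monic_prod_of_monic _ _ fun i _ => hm i, ?_⟩
  rw [natDegree_prod_of_monic _ _ fun i _ => hm i]
  refine Finset.sum_congr rfl fun i _ => ?_
  rw [(h i).1.natDegree_pow, (h i).2, mul_comm]

/-- The weight `∑ u ^ i v_i` is the number with base-`u` digits `v_i`, so it determines exponents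
that are smaller than `u`. -/
lemma weight_ne {u : ℕ} (hu : 1 < u) {v w : Fin (n + 1) →₀ ℕ} (hv : ∀ i, v i < u)
    (hw : ∀ i, w i < u) (ne : v ≠ w) : ∑ i, u ^ i.1 * v i ≠ ∑ i, u ^ i.1 * w i := by
  intro h
  refine ne <| Finsupp.ext <| congrFun <| List.ofFn_inj.mp ?_
  apply Nat.ofDigits_inj_of_len_eq hu (by simp)
    (by simpa only [List.mem_ofFn, Set.mem_range, forall_exists_index,
      forall_apply_eq_imp_iff] using hv)
    (by simpa only [List.mem_ofFn, Set.mem_range, forall_exists_index,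
      forall_apply_eq_imp_iff] using hw)
  simpa only [Nat.ofDigits_eq_sum_mapIdx, List.mapIdx_eq_ofFn, List.get_ofFn, List.length_ofFn,
    Fin.val_cast, mul_comm, List.sum_ofFn] using! h

/-- Every nonzero polynomial becomes, up to a scalar, monic in one variable after a change of
coordinates: for `u` large, distinct monomials of `f` acquire distinct `X_0`-degrees under Nagata's
substitution, so the one of largest degree provides the leading term. -/
lemma exists_monic_equiv {f : MvPolynomial (Fin (n + 1)) k} (hf : f ≠ 0) :
    ∃ e : MvPolynomial (Fin (n + 1)) k ≃ₐ[k] (MvPolynomial (Fin n) k)[X], ∃ c : k,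
      c ≠ 0 ∧ (e (c • f)).Monic := by
  set u := 2 + f.totalDegree with hu
  let e := nagataPoly k n u
  have hlt : ∀ v ∈ f.support, ∀ i, v i < u := fun v hv i =>
    lt_of_le_of_lt ((monomial_le_degreeOf i hv).trans (degreeOf_le_totalDegree f i)) (by omega)
  let W : (Fin (n + 1) →₀ ℕ) → ℕ := fun v => ∑ i, u ^ i.1 * v i
  obtain ⟨v, hv, hmax⟩ := Finset.exists_max_image f.support W (support_nonempty.mpr hf)
  have hc : f.coeff v ≠ 0 := MvPolynomial.mem_support_iff.mp hv
  refine ⟨e, (f.coeff v)⁻¹, inv_ne_zero hc, ?_⟩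
  have hmono : ∀ w (c : k), e (MvPolynomial.monomial w c) = c • e (MvPolynomial.monomial w 1) := by
    intro w c
    rw [← map_smul, MvPolynomial.smul_monomial, smul_eq_mul, mul_one]
  have hsum : (f.coeff v)⁻¹ • f = MvPolynomial.monomial v 1 +
      ∑ w ∈ f.support \ {v}, MvPolynomial.monomial w ((f.coeff v)⁻¹ * f.coeff w) := by
    conv_lhs => rw [← f.support_sum_monomial_coeff,
      Finset.sum_eq_add_sum_sdiff_singleton_of_mem hv, smul_add, Finset.smul_sum]
    simp [MvPolynomial.smul_monomial, hc]
  rw [hsum, map_add, map_sum]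
  obtain ⟨h1, h2⟩ := nagataPoly_monomial (k := k) u (by omega) v
  refine h1.add_of_left ?_
  refine (degree_sum_le _ _).trans_lt ?_
  rw [Finset.sup_lt_iff (bot_lt_iff_ne_bot.2 (by
    rw [Ne, Polynomial.degree_eq_bot]; exact h1.ne_zero))]
  intro w hw
  obtain ⟨hw1, hw2⟩ := Finset.mem_sdiff.1 hw
  rw [hmono]
  refine (degree_smul_le _ _).trans_lt ?_
  obtain ⟨h3, h4⟩ := nagataPoly_monomial (k := k) u (by omega) w
  rw [Polynomial.degree_eq_natDegree h3.ne_zero, Polynomial.degree_eq_natDegree h1.ne_zero, h2, h4]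
  exact_mod_cast lt_of_le_of_ne (hmax w hw1)
    (weight_ne (by omega) (hlt w hw1) (hlt v hv) (by simpa using hw2))

end NagataPart

/-! ### Dimension and functionals over the parameter ring -/

section DimPart

/-- Incomparability: primes of an integral extension contract strictly monotonically. -/
lemma ringKrullDim_le_of_isIntegral_s9 {R S : Type} [CommRing R] [CommRing S] [Algebra R S]
    [Algebra.IsIntegral R S] : ringKrullDim S ≤ ringKrullDim R :=
  Order.krullDim_le_of_strictMono (PrimeSpectrum.comap (algebraMap R S))
    fun _ _ h => Ideal.IsIntegral.comap_lt_comap h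

/-- Lying over and going up: chains of primes lift along an injective integral extension. -/
lemma le_ringKrullDim_of_isIntegral {R S : Type} [CommRing R] [CommRing S] [Algebra R S]
    [Algebra.IsIntegral R S] (hinj : Function.Injective (algebraMap R S)) :
    ringKrullDim R ≤ ringKrullDim S := by
  have : FaithfulSMul R S := (faithfulSMul_iff_algebraMap_injective R S).2 hinj
  refine iSup_le fun l => ?_
  obtain ⟨Q, hQ, hQ'⟩ : Nonempty (l.head.asIdeal.primesOver S) := inferInstance
  have := hQ'
  obtain ⟨L, hL, -⟩ := Ideal.exists_ltSeries_of_hasGoingUp l Q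
  rw [← hL]
  exact Order.LTSeries.length_le_krullDim L

/-- If `A ⧸ J` is finite over `P = k[y_1, …, y_d]`, an ideal `K ⊇ J` has `dim A ⧸ K = d` exactly
when it meets `P` in zero. If `0 ≠ c ∈ K ∩ P`, then `A ⧸ K` is finite over `P ⧸ (c)`, which has dimension
less than `d`. -/
lemma ringKrullDim_quotient_eq_iff {k : Type} [Field k] {d : ℕ} {A : Type} [CommRing A]
    (g : MvPolynomial (Fin d) k →+* A) (J K : Ideal A) (hJK : J ≤ K)
    (hfin : ((Ideal.Quotient.mk J).comp g).Finite) :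
    ringKrullDim (A ⧸ K) = d ↔ K.comap g = ⊥ := by
  have hfin' : ((Ideal.Quotient.mk K).comp g).Finite := by
    have : (Ideal.Quotient.mk K).comp g =
      (Ideal.Quotient.factor hJK).comp ((Ideal.Quotient.mk J).comp g) := by
      ext <;> simp
    rw [this]
    exact (RingHom.Finite.of_surjective _ (Ideal.Quotient.factor_surjective _)).comp hfin
  have hdim : ringKrullDim (MvPolynomial (Fin d) k) = d := by
    simp
  constructor
  · intro h
    by_contra hne
    obtain ⟨c, hc, hc0⟩ := Submodule.exists_mem_ne_zero_of_ne_bot hne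
    let g' : (MvPolynomial (Fin d) k ⧸ Ideal.span {c}) →+* A ⧸ K :=
      Ideal.Quotient.lift _ ((Ideal.Quotient.mk K).comp g) (by
        intro a ha
        have := (Ideal.span_singleton_le_iff_mem _).2 hc ha
        simpa [Ideal.Quotient.eq_zero_iff_mem] using this)
    have hg' : g'.Finite := RingHom.Finite.of_comp_finite (f := Ideal.Quotient.mk _) (by
      convert hfin'
      ext <;> simp [g'])
    algebraize [g']
    have h1 := ringKrullDim_le_of_isIntegral_s9
      (R := MvPolynomial (Fin d) k ⧸ Ideal.span {c}) (S := A ⧸ K)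
    have h2 := ringKrullDim_quotient_succ_le_of_nonZeroDivisor
      (mem_nonZeroDivisors_of_ne_zero hc0)
    rw [h] at h1
    rw [hdim] at h2
    have h3 : ((d : WithBot ℕ∞) + 1) ≤ d := (add_le_add_left h1 1).trans h2
    exact absurd h3 (by norm_cast; omega)
  · intro h
    algebraize [(Ideal.Quotient.mk K).comp g]
    have := le_ringKrullDim_of_isIntegral (R := MvPolynomial (Fin d) k) (S := A ⧸ K) (by
      change Function.Injective ((Ideal.Quotient.mk K).comp g)
      rw [RingHom.injective_iff_ker_eq_bot, ← h, ← RingHom.comap_ker, Ideal.mk_ker])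
    rw [← hdim]
    exact le_antisymm ringKrullDim_le_of_isIntegral_s9 this

/-- Linear functionals separate the points of a finite torsion-free module `M` over a Noetherian
domain `P`: take a functional on `M ⊗ Frac P` and clear denominators. -/
lemma exists_functional {P : Type} [CommRing P] [IsDomain P] [IsNoetherianRing P]
    (M : Type) [AddCommGroup M] [Module P M] [Module.Finite P M]
    (htf : ∀ (c : P) (m : M), c ≠ 0 → c • m = 0 → m = 0) (m : M) (hm : m ≠ 0) :
    ∃ ψ : M →ₗ[P] P, ψ m ≠ 0 := by
  let S := nonZeroDivisors P
  let F := FractionRing P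
  let ι := LocalizedModule.mkLinearMap S M
  have h0 : ι m ≠ 0 := by
    intro h
    obtain ⟨c, hc⟩ := (IsLocalizedModule.eq_zero_iff S ι).1 h
    exact hm (htf c m (nonZeroDivisors.coe_ne_zero c) hc)
  obtain ⟨χ, hχ⟩ := Module.Projective.exists_dual_ne_zero F h0
  have := Module.finitePresentation_of_finite P M
  obtain ⟨ψ, s, hψ⟩ := Module.FinitePresentation.exists_lift_of_isLocalizedModule S
    (Algebra.linearMap P F) ((χ.restrictScalars P).comp ι)
  refine ⟨ψ, fun h => hχ ?_⟩
  have h1 := LinearMap.congr_fun hψ m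
  have h2 : Algebra.linearMap P F (ψ m) = (s : P) • χ (ι m) := h1
  rw [h, map_zero, eq_comm] at h2
  rw [Algebra.smul_def] at h2
  exact (mul_eq_zero.1 h2).resolve_left
    (IsFractionRing.to_map_ne_zero_of_mem_nonZeroDivisors s.2)

end DimPart

/-! ### Existence of adapted parameters, and the theorem -/

section MainPart
open RingTheory.Sequence

theorem hasParam_of_ne_top (k : Type) [Field k] (n : ℕ) :
    ∀ I : Ideal (MvPolynomial (Fin n) k), I ≠ ⊤ → HasParam k n (MvPolynomial (Fin n) k) I := by
  induction n with
  | zero =>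
    intro I hI
    have : I = ⊥ := by
      let e := MvPolynomial.isEmptyRingEquiv k (Fin 0)
      by_contra h
      obtain ⟨f, hf, hf0⟩ := Submodule.exists_mem_ne_zero_of_ne_bot h
      refine hI (I.eq_top_of_isUnit_mem hf ?_)
      rw [← MulEquiv.isUnit_map e]
      exact isUnit_iff_ne_zero.2 (by simpa using hf0)
    rw [this]
    exact hasParam_bot k 0
  | succ n ih =>
    intro I hI
    by_cases h : I = ⊥
    · rw [h]; exact hasParam_bot k _
    · obtain ⟨f, hf, hf0⟩ := Submodule.exists_mem_ne_zero_of_ne_bot h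
      obtain ⟨e, c, hc, hm⟩ := exists_monic_equiv hf0
      have hI' : I.map e.toRingEquiv ≠ ⊤ := by
        rw [← Ideal.comap_symm]
        exact Ideal.comap_ne_top _ hI
      refine HasParam.congr e.toRingEquiv (HasParam.step (ih _ ?_) hm ?_ hI')
      · exact Ideal.comap_ne_top _ hI'
      · exact Ideal.mem_map_of_mem e.toRingEquiv (I.smul_of_tower_mem c hf)

/-- `exists_functional` for a finite `A`-module killed by `J`, when `A ⧸ J` is finite over `P` via
`g` and torsion is measured through `g`. -/
theorem exists_functional_of_finite {P A : Type} [CommRing P] [IsDomain P] [IsNoetherianRing P]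
    [CommRing A] (g : P →+* A) (J : Ideal A) (hfin : ((Ideal.Quotient.mk J).comp g).Finite)
    (M : Type) [AddCommGroup M] [Module A M] [Module.Finite A M]
    (hJ : ∀ x ∈ J, ∀ m : M, x • m = 0)
    (htf : ∀ (c : P) (m : M), c ≠ 0 → g c • m = 0 → m = 0) (m : M) (hm : m ≠ 0) :
    ∃ ψ : M →+ P, (∀ c m, ψ (g c • m) = c * ψ m) ∧ ψ m ≠ 0 := by
  let _ : Module (A ⧸ J) M :=
    Module.IsTorsionBySet.module (I := J) (R := A)
      (fun m x => hJ x x.2 m)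
  have : IsScalarTower A (A ⧸ J) M :=
    Module.IsTorsionBySet.isScalarTower (I := J) (R := A)
      (fun m x => hJ x x.2 m)
  have : Module.Finite (A ⧸ J) M := Module.Finite.of_restrictScalars_finite A _ _
  let _ : Algebra P (A ⧸ J) := ((Ideal.Quotient.mk J).comp g).toAlgebra
  have : Module.Finite P (A ⧸ J) := hfin
  let _ : Module P M := Module.compHom M g
  have : IsScalarTower P (A ⧸ J) M := ⟨fun c a m => by
    obtain ⟨a, rfl⟩ := Ideal.Quotient.mk_surjective a
    exact mul_smul (g c) a m⟩
  have : Module.Finite P M := Module.Finite.trans (A ⧸ J) M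
  obtain ⟨ψ, hψ⟩ := exists_functional (P := P) M htf m hm
  exact ⟨ψ.toAddMonoidHom, fun c m => ψ.map_smul c m, hψ⟩

end MainPart

/-- For `A = k[x_1, …, x_n]` with `k` a field and `n ≥ 1`, and `M` a nonzero finitely generated
`A`-module with `cd(M) = r` (i.e. `dim (A / ann_A M) = n - r`, `r ≤ n`): `M` is `r`-pure if and
only if there is an injective `A`-linear map `M → Ext^r_A(Ext^r_A(M, A), A)`. -/
theorem pure_iff_exists_embedding_ext_ext (k : Type) [Field k] (n : ℕ) (hn : 1 ≤ n)
    (M : Type) [AddCommGroup M] [Module (MvPolynomial (Fin n) k) M]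
    [Module.Finite (MvPolynomial (Fin n) k) M] [Nontrivial M]
    (r : ℕ) (hr : r ≤ n)
    (hcd : ringKrullDim (MvPolynomial (Fin n) k ⧸
        Module.annihilator (MvPolynomial (Fin n) k) M) = ((n - r : ℕ) : WithBot (WithTop ℕ))) :
    IsPureMod k n r M ↔
      ∃ f : M →ₗ[MvPolynomial (Fin n) k]
          extModule (MvPolynomial (Fin n) k) (extModule (MvPolynomial (Fin n) k) M r) r,
        Function.Injective f := by
  have hI : Module.annihilator (MvPolynomial (Fin n) k) M ≠ ⊤ := by
    rw [Ne, Module.annihilator_eq_top_iff]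
    exact not_subsingleton M
  obtain ⟨d, g, xs, J, hJ, hlen, hJI, hc, hfin, hreg, htf, hlift⟩ := hasParam_of_ne_top k n _ hI
  have hd : d = n - r := by
    have h : ((n - r : ℕ) : WithBot ℕ∞) = (d : WithBot ℕ∞) :=
      hcd.symm.trans ((ringKrullDim_quotient_eq_iff g J _ hJI hfin).2 hc)
    exact_mod_cast h.symm
  have hxr : xs.length = r := by omega
  have hJM : ∀ x ∈ J, ∀ m : M, x • m = 0 := fun x hx => Module.mem_annihilator.1 (hJI hx)
  -- `r`-purity is torsion-freeness over the parameter ring.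
  have hpure : IsPureMod k n r M ↔
      ∀ (c : MvPolynomial (Fin d) k) (m : M), c ≠ 0 → g c • m = 0 → m = 0 := by
    have key : ∀ m : M, ringKrullDim (MvPolynomial (Fin n) k ⧸
        (Submodule.span (MvPolynomial (Fin n) k) {m}).annihilator)
          = ((n - r : ℕ) : WithBot (WithTop ℕ)) ↔
          ∀ c : MvPolynomial (Fin d) k, g c • m = 0 → c = 0 := by
      intro m
      rw [← hd]
      refine (ringKrullDim_quotient_eq_iff g J _ ?_ hfin).trans ?_
      · intro x hx
        rw [Submodule.mem_annihilator_span_singleton]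
        exact hJM x hx m
      · rw [eq_bot_iff]
        refine forall_congr' fun c => ?_
        rw [Ideal.mem_comap, Submodule.mem_annihilator_span_singleton, Ideal.mem_bot]
    constructor
    · intro h c m hc0 hcm
      by_contra hm
      exact hc0 ((key m).1 (h m hm) c hcm)
    · intro h m hm
      rw [key]
      intro c hcm
      by_contra hc0
      exact hm (h c m hc0 hcm)
  rw [hpure]
  subst hJ hxr
  have hmem : ∀ x ∈ xs, x ∈ Ideal.ofList xs := fun x hx => Ideal.subset_span hx
  obtain ⟨e₁⟩ := rees M xs hreg fun x hx => hJM x (hmem x hx)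
  have hN : ∀ x ∈ xs, ∀ y : extModule (MvPolynomial (Fin n) k) M xs.length, x • y = 0 := by
    intro x hx y
    apply e₁.injective
    ext m
    rw [map_smul, map_zero, LinearMap.smul_apply, ← map_smul, hJM x (hmem x hx), map_zero]
    rfl
  obtain ⟨e₂⟩ := rees (extModule (MvPolynomial (Fin n) k) M xs.length) xs hreg hN
  constructor
  · intro h
    -- `e₁.flip` is evaluation `M → Hom(Hom(M, A ⧸ J), A ⧸ J)`, up to the identification `e₁`.
    refine ⟨e₂.symm.toLinearMap.comp (e₁.toLinearMap.flip), ?_⟩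
    rw [LinearMap.coe_comp]
    refine e₂.symm.injective.comp ((injective_iff_map_eq_zero _).2 fun m hm0 => ?_)
    by_contra hm
    obtain ⟨ψ, hψ, hψm⟩ := exists_functional_of_finite g _ hfin M hJM h m hm
    obtain ⟨φ, hφ⟩ := hlift M hJM ψ hψ m hψm
    apply hφ
    have := LinearMap.congr_fun hm0 (e₁.symm φ)
    simpa using this
  · rintro ⟨f, hf⟩ c m hc0 hcm
    apply (e₂.injective.comp hf)
    simp only [Function.comp, map_zero]
    ext y
    have h1 : g c • e₂ (f m) y = 0 := by
      rw [← LinearMap.smul_apply, ← map_smul, ← map_smul, hcm, map_zero, map_zero]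
      rfl
    obtain ⟨p, hp⟩ := Ideal.Quotient.mk_surjective (e₂ (f m) y)
    rw [← hp] at h1 ⊢
    have h2 : Ideal.Quotient.mk (Ideal.ofList xs) (g c * p) = 0 := h1
    rw [Ideal.Quotient.eq_zero_iff_mem] at h2
    exact Ideal.Quotient.eq_zero_iff_mem.2 (htf c p hc0 h2)
end
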